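/- Let (X_1,d_1),…,(X_q,d_q),(Z_1,D_1),…,(Z_Q,D_Q) be smooth vector fields on a neighborhood Ω of 0 in ℝ^n, each paired with a ν-parameter degree, and suppose there exist ξ_1 > 0 and a neighborhood U ⊆ Ω of 0 such that (𝐗,𝐝) := {(X_1,d_1),…,(X_q,d_q)} satisfies 𝒞(x,ξ⃗_1,Ω) for every x ∈ U. If (𝐗,𝐝) controls every element of {([X_i,X_j], d_i+d_j) : 1 ≤ i,j ≤ q} and every element of (𝐙,𝐃) := {(Z_1,D_1),…,(Z_Q,D_Q)}, on U with parameter ξ_1, then there exists c > 0 such that B_{(𝐙,𝐃)}(x, cξ_1δ) ⊆ B_{(𝐗,𝐝)}(x, ξ_1δ) for every x ∈ U and δ ∈ [0,1]^ν, and (𝐙,𝐃) satisfies 𝒞(x, cξ⃗_1, Ω) for all x ∈ U. -/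

import Mathlib

open MeasureTheory Metric Filter Set
open scoped ENNReal NNReal Topology

noncomputable section

namespace Zhang

/-- `ℝ^n` with the Euclidean norm. -/
abbrev Euc (n : ℕ) := EuclideanSpace ℝ (Fin n)

/-- Vector fields on `ℝ^n` (as everywhere-defined maps). -/
abbrev VF (n : ℕ) := Euc n → Euc n

/-- `ν`-parameter degrees. -/
abbrev Deg (ν : ℕ) := Fin ν → ℝ

variable {N ν n q : ℕ}

/-- Admissible multi-parameter dilation data `e = {e_1,…,e_N} ⊆ [0,∞)^ν`. -/
def AdmissibleE (e : Fin N → Fin ν → ℝ) : Prop :=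
  (∀ i μ, 0 ≤ e i μ) ∧ (∀ i, ∃ μ, e i μ ≠ 0) ∧ (∀ μ, ∃ i, e i μ ≠ 0)

/-- `δ^d = ∏_μ δ_μ^{d_μ}` (real exponents). -/
def dpow (δ d : Fin ν → ℝ) : ℝ := ∏ μ, δ μ ^ d μ

/-- The multi-parameter dilation `δ t = (δ^{e_1} t_1, …, δ^{e_N} t_N)`. -/
def dilate (e : Fin N → Fin ν → ℝ) (δ : Fin ν → ℝ) (t : Euc N) : Euc N :=
  (EuclideanSpace.equiv (Fin N) ℝ).symm fun i => dpow δ (e i) * t i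

/-- `ς^{(δ)}(t) = δ^{e_1+⋯+e_N} ς(δ t)`. -/
def scaled (e : Fin N → Fin ν → ℝ) (ς : Euc N → ℝ) (δ : Fin ν → ℝ) : Euc N → ℝ :=
  fun t => (∏ i, dpow δ (e i)) * ς (dilate e δ t)

/-- `2^k = (2^{k_1},…,2^{k_ν})`. -/
def twoPow (k : Fin ν → ℕ) : Fin ν → ℝ := fun μ => 2 ^ k μ

/-- The (global) `C^m` supremum norm of a function. -/
def CmSupNorm {E F : Type*} [NormedAddCommGroup E] [NormedSpace ℝ E]
    [NormedAddCommGroup F] [NormedSpace ℝ F] (m : ℕ) (f : E → F) : ℝ :=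
  ∑ j ∈ Finset.range (m + 1), ⨆ t, ‖iteratedFDeriv ℝ j f t‖

/-- The `C^m` supremum norm of a function on a set. -/
def CmSupNormOn {E F : Type*} [NormedAddCommGroup E] [NormedSpace ℝ E]
    [NormedAddCommGroup F] [NormedSpace ℝ F] (m : ℕ) (s : Set E) (f : E → F) : ℝ :=
  ∑ j ∈ Finset.range (m + 1), ⨆ t ∈ s, ‖iteratedFDerivWithin ℝ j f s t‖

/-- The cancellation condition: the integral of `g` in the coordinates `t_i` with
`e_i^μ ≠ 0` vanishes identically as a function of the remaining coordinates. -/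
def CancelCond (e : Fin N → Fin ν → ℝ) (μ : Fin ν) (g : Euc N → ℝ) : Prop :=
  ∀ t : Fin N → ℝ,
    haveI : DecidablePred fun i : Fin N => e i μ ≠ 0 := Classical.decPred _
    (∫ s : {i : Fin N // e i μ ≠ 0} → ℝ,
        g ((EuclideanSpace.equiv (Fin N) ℝ).symm fun i =>
          if h : e i μ ≠ 0 then s ⟨i, h⟩ else t i)) = 0

/-- Kernel data for the class `𝒦(N,e,a,ν)`: a sequence `{ς_k}_{k∈ℕ^ν}` bounded in
`C_c^∞(B^N(a))` satisfying the cancellation conditions. -/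
def IsKernelSeq (e : Fin N → Fin ν → ℝ) (a : ℝ) (ς : (Fin ν → ℕ) → Euc N → ℝ) : Prop :=
  (∀ k, ContDiff ℝ (⊤ : ℕ∞) (ς k)) ∧
  (∀ k, tsupport (ς k) ⊆ ball (0 : Euc N) a) ∧
  (∀ m, ∃ C : ℝ, ∀ k, CmSupNorm m (ς k) ≤ C) ∧
  (∀ k μ, k μ ≠ 0 → CancelCond e μ (ς k))

/-- Membership in the Fréchet space `𝒦̄(N,e,a,ν)` (closed ball support). -/
def MemKbar (e : Fin N → Fin ν → ℝ) (a : ℝ) (ς : (Fin ν → ℕ) → Euc N → ℝ) : Prop :=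
  (∀ k, ContDiff ℝ (⊤ : ℕ∞) (ς k)) ∧
  (∀ k, tsupport (ς k) ⊆ closedBall (0 : Euc N) a) ∧
  (∀ m, ∃ C : ℝ, ∀ k, CmSupNorm m (ς k) ≤ C) ∧
  (∀ k μ, k μ ≠ 0 → CancelCond e μ (ς k))

/-- The seminorm `‖{ς_k}‖_m = sup_k ‖ς_k‖_{C^m}` of `𝒦̄(N,e,a,ν)`. -/
def seqSeminorm (m : ℕ) (ς : (Fin ν → ℕ) → Euc N → ℝ) : ℝ :=
  ⨆ k, CmSupNorm m (ς k)

/-- The multi-indices `k ∈ ℕ^ν` with all coordinates `≤ M`. -/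
def trunc (ν M : ℕ) : Finset (Fin ν → ℕ) :=
  Finset.image (fun k : Fin ν → Fin (M + 1) => fun μ => (k μ : ℕ)) Finset.univ

/-- The partial-sum operators `f ↦ ψ(x) Σ_{|k|≤M} ∫ f(γ_t(x)) ς_k^{(2^k)}(t) dt`. -/
def partialOp (e : Fin N → Fin ν → ℝ) (γ : Euc N → Euc n → Euc n) (ψ : Euc n → ℝ)
    (ς : (Fin ν → ℕ) → Euc N → ℝ) (M : ℕ) (f : Euc n → ℝ) : Euc n → ℝ :=
  fun x => ψ x * ∑ k ∈ trunc ν M, ∫ t : Euc N, f (γ t x) * scaled e (ς k) (twoPow k) t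

/-- `T` is bounded on `L^p`: the partial-sum operators are bounded uniformly in `M`. -/
def OpBounded (p : ℝ) (e : Fin N → Fin ν → ℝ) (γ : Euc N → Euc n → Euc n)
    (ψ : Euc n → ℝ) (ς : (Fin ν → ℕ) → Euc N → ℝ) : Prop :=
  ∃ C : ℝ≥0, ∀ M : ℕ, ∀ f : Euc n → ℝ, ContDiff ℝ (⊤ : ℕ∞) f → HasCompactSupport f →
    eLpNorm (partialOp e γ ψ ς M f) (ENNReal.ofReal p) volume ≤
      C * eLpNorm f (ENNReal.ofReal p) volume

/-- All operators with small `ψ` and small kernels in `𝒦(N,e,a,ν)` are `L^p` bounded. -/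
def AllOpsBounded (p : ℝ) (e : Fin N → Fin ν → ℝ) (γ : Euc N → Euc n → Euc n) : Prop :=
  ∃ ε a : ℝ, 0 < ε ∧ 0 < a ∧
    ∀ ψ : Euc n → ℝ, ContDiff ℝ (⊤ : ℕ∞) ψ → HasCompactSupport ψ →
      tsupport ψ ⊆ ball (0 : Euc n) ε →
      ∀ ς : (Fin ν → ℕ) → Euc N → ℝ, IsKernelSeq e a ς → OpBounded p e γ ψ ς

/-! ### Vector fields, brackets, Carnot–Carathéodory geometry -/

/-- The Lie bracket of two vector fields. -/
def lieBracket (X Y : VF n) : VF n := fun x => fderiv ℝ Y x (X x) - fderiv ℝ X x (Y x)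

/-- `ℒ(S)`: the smallest set of (vector field, degree) pairs containing `S` and
closed under Lie brackets (adding degrees). -/
inductive LieGen (S : Set (VF n × Deg ν)) : VF n × Deg ν → Prop
  | base {P : VF n × Deg ν} : P ∈ S → LieGen S P
  | bracket {X Y : VF n} {d d' : Deg ν} : LieGen S (X, d) → LieGen S (Y, d') →
      LieGen S (lieBracket X Y, d + d')

def lieSpan (S : Set (VF n × Deg ν)) : Set (VF n × Deg ν) := {P | LieGen S P}

def unitCube (ν : ℕ) : Set (Fin ν → ℝ) := {δ | ∀ μ, 0 ≤ δ μ ∧ δ μ ≤ 1}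

def vecConst (ν : ℕ) (ξ : ℝ) : Fin ν → ℝ := fun _ => ξ

/-- `a` is a measurable control with `‖Σ_l |a_l|²‖_{L^∞[0,1]} < 1`. -/
def IsSubunit {ι : Type*} [Fintype ι] (a : ℝ → ι → ℝ) : Prop :=
  (∀ l, Measurable fun s => a s l) ∧
  ∃ c : ℝ, c < 1 ∧ ∀ᵐ s ∂(volume.restrict (Set.Icc (0 : ℝ) 1)), ∑ l, a s l ^ 2 ≤ c

/-- `g` is an absolutely continuous solution of `g' = Σ_l a_l δ^{d_l} X_l(g)`, `g(0)=x`,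
in integral form. -/
def SolvesODE {ι : Type*} [Fintype ι] (X : ι → VF n) (d : ι → Deg ν) (δ : Fin ν → ℝ)
    (a : ℝ → ι → ℝ) (x : Euc n) (g : ℝ → Euc n) : Prop :=
  g 0 = x ∧ ∀ u ∈ Set.Icc (0 : ℝ) 1,
    g u = x + ∫ s in (0 : ℝ)..u, ∑ l, a s l • dpow δ (d l) • X l (g s)

/-- The multi-parameter Carnot–Carathéodory ball `B_{(X,d)}(x,δ)` inside `Ω`. -/
def CCBall {ι : Type*} [Fintype ι] (X : ι → VF n) (d : ι → Deg ν) (Ω : Set (Euc n))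
    (x : Euc n) (δ : Fin ν → ℝ) : Set (Euc n) :=
  {y | ∃ (g : ℝ → Euc n) (a : ℝ → ι → ℝ), IsSubunit a ∧
      (∀ u ∈ Set.Icc (0 : ℝ) 1, g u ∈ Ω) ∧ SolvesODE X d δ a x g ∧ g 1 = y}

/-- `(X,d)` satisfies `𝒞(x,δ,Ω)`. -/
def SatC {ι : Type*} [Fintype ι] (X : ι → VF n) (d : ι → Deg ν) (x : Euc n)
    (δ : Fin ν → ℝ) (Ω : Set (Euc n)) : Prop :=
  ∀ a : ℝ → ι → ℝ, IsSubunit a →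
    ∃ g : ℝ → Euc n, (∀ u ∈ Set.Icc (0 : ℝ) 1, g u ∈ Ω) ∧ SolvesODE X d δ a x g

/-- The derivation of a scalar function along a vector field. -/
def derivAlong (Y : VF n) (f : Euc n → ℝ) : Euc n → ℝ := fun x => fderiv ℝ f x (Y x)

/-- `(δX)^α f`: iterated derivations indexed by the ordered multi-index `α`. -/
def derivList {ι : Type*} (X : ι → VF n) (w : ι → ℝ) (α : List ι) (f : Euc n → ℝ) :
    Euc n → ℝ :=
  α.foldr (fun l g => derivAlong (fun x => w l • X l x) g) f

/-- `(X,d)` controls `(X₀,d₀)` on `U` with parameter `ξ₁` (ambient `Ω`). -/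
def ControlsOn {ι : Type*} [Fintype ι] (X : ι → VF n) (d : ι → Deg ν)
    (Ω U : Set (Euc n)) (ξ₁ : ℝ) (X₀ : VF n) (d₀ : Deg ν) : Prop :=
  (∀ x ∈ U, SatC X d x (vecConst ν ξ₁) Ω) ∧
  ∃ c : Euc n → (Fin ν → ℝ) → ι → Euc n → ℝ,
    (∀ x ∈ U, ∀ δ ∈ unitCube ν, ∀ y ∈ CCBall X d Ω x (fun μ => ξ₁ * δ μ),
      dpow δ d₀ • X₀ y = ∑ l, c x δ l y • dpow δ (d l) • X l y) ∧
    (∀ x ∈ U, ∀ δ ∈ unitCube ν, ∀ l, ∀ α : List ι,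
      ContinuousOn (derivList X (fun l' => dpow δ (d l')) α (c x δ l))
        (CCBall X d Ω x (fun μ => ξ₁ * δ μ))) ∧
    (∀ m : ℕ, ∃ C : ℝ, ∀ x ∈ U, ∀ δ ∈ unitCube ν, ∀ l, ∀ α : List ι, α.length ≤ m →
      ∀ y ∈ CCBall X d Ω x (fun μ => ξ₁ * δ μ),
        |derivList X (fun l' => dpow δ (d l')) α (c x δ l) y| ≤ C)

/-- `(X,d)` controls `(X₀,d₀)` (some `U`, `ξ₁`), ambient `Ω`. -/
def ControlsPair {ι : Type*} [Fintype ι] (X : ι → VF n) (d : ι → Deg ν)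
    (Ω : Set (Euc n)) (X₀ : VF n) (d₀ : Deg ν) : Prop :=
  ∃ (U : Set (Euc n)) (ξ₁ : ℝ), IsOpen U ∧ (0 : Euc n) ∈ U ∧ U ⊆ Ω ∧ 0 < ξ₁ ∧
    ControlsOn X d Ω U ξ₁ X₀ d₀

/-- A finite set of pairs controls a pair (ambient neighborhood existentially quantified). -/
def FinsetControls (F : Finset (VF n × Deg ν)) (P : VF n × Deg ν) : Prop :=
  ∃ Ω : Set (Euc n), IsOpen Ω ∧ (0 : Euc n) ∈ Ω ∧
    ControlsPair (fun l : F => (l : VF n × Deg ν).1) (fun l : F => (l : VF n × Deg ν).2)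
      Ω P.1 P.2

/-- A set `S` of pairs controls a set `T`. -/
def SetControls (S T : Set (VF n × Deg ν)) : Prop :=
  ∃ F : Finset (VF n × Deg ν), ↑F ⊆ S ∧ ∀ P ∈ S ∪ T, FinsetControls F P

/-! ### Degrees, Taylor coefficients, exponential coefficients -/

def degMulti (e : Fin N → Fin ν → ℝ) (α : Fin N → ℕ) : Fin ν → ℝ :=
  fun μ => ∑ i, (α i : ℝ) * e i μ

/-- A degree is pure if it has exactly one nonzero coordinate. -/
def IsPureDeg (dg : Fin ν → ℝ) : Prop := ∃! μ, dg μ ≠ 0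

/-- `t^α`. -/
def monomial (α : Fin N → ℕ) (t : Euc N) : ℝ := ∏ i, t i ^ α i

/-- The multi-indices `α` with `|α| < M`. -/
def multiIdxLt (N M : ℕ) : Finset (Fin N → ℕ) :=
  (trunc N M).filter fun α => ∑ i, α i < M

/-- `X` is the family of Taylor coefficient vector fields of `W` at `t = 0`, on `U`. -/
def IsTaylorFieldOf (W : Euc N → Euc n → Euc n) (U : Set (Euc n))
    (X : (Fin N → ℕ) → VF n) : Prop :=
  X 0 = 0 ∧ (∀ α, ContDiffOn ℝ (⊤ : ℕ∞) (X α) U) ∧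
  ∀ M : ℕ, ∃ C ε : ℝ, 0 < ε ∧ ∀ t ∈ ball (0 : Euc N) ε, ∀ x ∈ U,
    ‖W t x - ∑ α ∈ multiIdxLt N M, monomial α t • X α x‖ ≤ C * ‖t‖ ^ M

/-- `W(t,x) = (d/dε)|_{ε=1} γ_{εt}(γ_t⁻¹(x))` on `B^N(ρ) × U`. -/
def IsWFor (γ : Euc N → Euc n → Euc n) (ρ : ℝ) (U : Set (Euc n))
    (W : Euc N → Euc n → Euc n) : Prop :=
  ∃ γinv : Euc N → Euc n → Euc n,
    (∀ t ∈ ball (0 : Euc N) ρ, ∀ x ∈ U, γ t (γinv t x) = x ∧ γinv t (γ t x) = x) ∧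
    ∀ t ∈ ball (0 : Euc N) ρ, ∀ x ∈ U,
      HasDerivAt (fun ε : ℝ => γ (ε • t) (γinv t x)) (W t x) 1

/-- `y` is the time-one flow of the vector field `V` from `x`. -/
def FlowsTo (V : VF n) (x y : Euc n) : Prop :=
  ∃ φ : ℝ → Euc n, φ 0 = x ∧ φ 1 = y ∧ ∀ s ∈ Set.Icc (0 : ℝ) 1, HasDerivAt φ (V (φ s)) s

/-- `Xh` is the family of exponential coefficient vector fields of `γ`:
`γ_t(x) = e^{Σ_{0<|α|<M} t^α X̂_α} x + O(|t|^M)` for every `M`. -/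
def IsExpFieldsFor (γ : Euc N → Euc n → Euc n) (U : Set (Euc n))
    (Xh : (Fin N → ℕ) → VF n) : Prop :=
  Xh 0 = 0 ∧ (∀ α, ContDiffOn ℝ (⊤ : ℕ∞) (Xh α) U) ∧
  ∀ M : ℕ, ∃ C ε : ℝ, 0 < ε ∧ ∀ t ∈ ball (0 : Euc N) ε, ∀ x ∈ U,
    ∃ y : Euc n, FlowsTo (fun z => ∑ α ∈ multiIdxLt N M, monomial α t • Xh α z) x y ∧
      ‖γ t x - y‖ ≤ C * ‖t‖ ^ M

/-- The pure power set `𝒫` of a family of coefficient fields. -/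
def pureSet (e : Fin N → Fin ν → ℝ) (X : (Fin N → ℕ) → VF n) : Set (VF n × Deg ν) :=
  {P | ∃ α : Fin N → ℕ, α ≠ 0 ∧ IsPureDeg (degMulti e α) ∧ P = (X α, degMulti e α)}

/-- The nonpure power set `𝒩` of a family of coefficient fields. -/
def nonpureSet (e : Fin N → Fin ν → ℝ) (X : (Fin N → ℕ) → VF n) : Set (VF n × Deg ν) :=
  {P | ∃ α : Fin N → ℕ, α ≠ 0 ∧ ¬ IsPureDeg (degMulti e α) ∧ P = (X α, degMulti e α)}

/-! ### Strong control -/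

/-- `(X,d)` strongly controls `(X₀,d₀)`. -/
def StrongControlsOn {ι : Type*} [Fintype ι] (X : ι → VF n) (d : ι → Deg ν)
    (X₀ : VF n) (d₀ : Deg ν) : Prop :=
  ∃ (U V : Set (Euc n)) (c : ι → Euc n → ℝ),
    IsOpen U ∧ (0 : Euc n) ∈ U ∧ IsOpen V ∧ closure U ⊆ V ∧
    (∀ l, ContDiffOn ℝ (⊤ : ℕ∞) (c l) V) ∧
    (∀ l, ¬ (∀ μ, d l μ ≤ d₀ μ) → c l = 0) ∧
    (∀ x ∈ U, X₀ x = ∑ l, c l x • X l x)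

/-- A finite set of pairs strongly controls a pair. -/
def FinsetStrongControls (F : Finset (VF n × Deg ν)) (P : VF n × Deg ν) : Prop :=
  StrongControlsOn (fun l : F => (l : VF n × Deg ν).1) (fun l : F => (l : VF n × Deg ν).2)
    P.1 P.2

/-- `(X,d)` strongly controls `W(t,x)`. -/
def StrongControlsW {ι : Type*} [Fintype ι] (X : ι → VF n) (d : ι → Deg ν)
    (e : Fin N → Fin ν → ℝ) (W : Euc N → Euc n → Euc n) : Prop :=
  ∃ (ρ' : ℝ) (U : Set (Euc n)) (V : Set (Euc N × Euc n)) (A : Finset (Fin N → ℕ))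
    (c : ι → (Fin N → ℕ) → Euc N → Euc n → ℝ),
    0 < ρ' ∧ IsOpen U ∧ (0 : Euc n) ∈ U ∧ IsOpen V ∧
    closure (ball (0 : Euc N) ρ' ×ˢ U) ⊆ V ∧
    (∀ l α, ContDiffOn ℝ (⊤ : ℕ∞) (fun p : Euc N × Euc n => c l α p.1 p.2) V) ∧
    (∀ l α, degMulti e α ≠ d l → c l α = 0) ∧
    (∀ t ∈ ball (0 : Euc N) ρ', ∀ x ∈ U,
      W t x = ∑ l, ∑ α ∈ A, (c l α t x * monomial α t) • X l x)

/-- A finite set of pairs strongly controls `W`. -/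
def FinsetStrongControlsW (F : Finset (VF n × Deg ν)) (e : Fin N → Fin ν → ℝ)
    (W : Euc N → Euc n → Euc n) : Prop :=
  StrongControlsW (fun l : F => (l : VF n × Deg ν).1) (fun l : F => (l : VF n × Deg ν).2)
    e W

/-! ### Control of `W` -/

/-- `∂_{t_i}` applied to a function of `(t,u)`. -/
def derivTAlong (i : Fin N) (f : Euc N → Euc n → ℝ) : Euc N → Euc n → ℝ :=
  fun t u => fderiv ℝ (fun s => f s u) t (EuclideanSpace.single i (1 : ℝ))

/-- Iterated `t`-partials indexed by an ordered multi-index. -/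
def derivTList (β : List (Fin N)) (f : Euc N → Euc n → ℝ) : Euc N → Euc n → ℝ :=
  β.foldr derivTAlong f

/-- Iterated `u`-derivations along scaled vector fields. -/
def derivUList {ι : Type*} (X : ι → VF n) (w : ι → ℝ) (β : List ι)
    (f : Euc N → Euc n → ℝ) : Euc N → Euc n → ℝ :=
  fun t => derivList X w β (f t)

/-- `(X,d)` controls `W` on `U` for `t ∈ B^N(ρ')` with parameter `ξ₁` (ambient `Ω`). -/
def ControlsWOn {ι : Type*} [Fintype ι] (X : ι → VF n) (d : ι → Deg ν)
    (e : Fin N → Fin ν → ℝ) (Ω U : Set (Euc n)) (ρ' ξ₁ : ℝ)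
    (W : Euc N → Euc n → Euc n) : Prop :=
  (∀ x ∈ U, SatC X d x (vecConst ν ξ₁) Ω) ∧
  ∃ c : Euc n → (Fin ν → ℝ) → ι → Euc N → Euc n → ℝ,
    (∀ x ∈ U, ∀ δ ∈ unitCube ν, ∀ t ∈ ball (0 : Euc N) ρ',
      ∀ u ∈ CCBall X d Ω x (fun μ => ξ₁ * δ μ),
        W (dilate e δ t) u = ∑ l, c x δ l t u • dpow δ (d l) • X l u) ∧
    (∀ x ∈ U, ∀ δ ∈ unitCube ν, ∀ l, ∀ β' : List (Fin N), ∀ β : List ι,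
      ContinuousOn
        (fun p : Euc N × Euc n =>
          derivTList β' (derivUList X (fun l' => dpow δ (d l')) β (c x δ l)) p.1 p.2)
        (ball (0 : Euc N) ρ' ×ˢ CCBall X d Ω x (fun μ => ξ₁ * δ μ))) ∧
    (∀ m : ℕ, ∃ C : ℝ, ∀ x ∈ U, ∀ δ ∈ unitCube ν, ∀ l, ∀ β' : List (Fin N), ∀ β : List ι,
      β'.length + β.length ≤ m → ∀ t ∈ ball (0 : Euc N) ρ',
        ∀ u ∈ CCBall X d Ω x (fun μ => ξ₁ * δ μ),
          |derivTList β' (derivUList X (fun l' => dpow δ (d l')) β (c x δ l)) t u| ≤ C)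

/-- `(X,d)` controls `W` (some `ρ' ≤ ρ`, `ξ₁`, `U`), ambient `Ω`. -/
def ControlsW {ι : Type*} [Fintype ι] (X : ι → VF n) (d : ι → Deg ν)
    (e : Fin N → Fin ν → ℝ) (Ω : Set (Euc n)) (ρ : ℝ)
    (W : Euc N → Euc n → Euc n) : Prop :=
  ∃ (ρ' ξ₁ : ℝ) (U : Set (Euc n)), 0 < ρ' ∧ ρ' ≤ ρ ∧ 0 < ξ₁ ∧ IsOpen U ∧
    (0 : Euc n) ∈ U ∧ U ⊆ Ω ∧ ControlsWOn X d e Ω U ρ' ξ₁ W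

end Zhang

open Zhang

namespace Zhang

section Trajectories

variable {ι : Type*} [Fintype ι]

/-- Measurable controls with `Σ_l |b_l|² ≤ r` everywhere. -/
structure IsCtrl (r : ℝ) (b : ℝ → ι → ℝ) : Prop where
  measurable : ∀ l, Measurable fun s => b s l
  bound : ∀ s, ∑ l, b s l ^ 2 ≤ r

/-- `g` is a continuous `Ω`-valued solution of `g' = Σ_l b_l Y_l(g)`, `g(0) = x` on `[0,u]`. -/
structure IsTraj {n : ℕ} (Y : ι → VF n) (Ω : Set (Euc n)) (b : ℝ → ι → ℝ) (x : Euc n)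
    (g : ℝ → Euc n) (u : ℝ) : Prop where
  cont : ContinuousOn g (Icc 0 u)
  mem : ∀ t ∈ Icc 0 u, g t ∈ Ω
  eq : ∀ t ∈ Icc 0 u, g t = x + ∫ s in (0 : ℝ)..t, ∑ l, b s l • Y l (g s)

variable {n : ℕ} {Y : ι → VF n} {Ω : Set (Euc n)} {b b' : ℝ → ι → ℝ} {x : Euc n}
  {g g' : ℝ → Euc n} {r u : ℝ}

lemma IsCtrl.abs_le_one (hb : IsCtrl r b) (hr : r ≤ 1) (s : ℝ) (l : ι) : |b s l| ≤ 1 := by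
  have h1 : b s l ^ 2 ≤ 1 :=
    (Finset.single_le_sum (f := fun l => b s l ^ 2) (fun i _ => sq_nonneg _)
      (Finset.mem_univ l)).trans ((hb.bound s).trans hr)
  exact (sq_le_one_iff_abs_le_one _).1 h1

lemma IsTraj.mono (h : IsTraj Y Ω b x g u) {v : ℝ} (hv : v ≤ u) : IsTraj Y Ω b x g v :=
  ⟨h.cont.mono (Icc_subset_Icc_right hv), fun t ht => h.mem t ⟨ht.1, ht.2.trans hv⟩,
    fun t ht => h.eq t ⟨ht.1, ht.2.trans hv⟩⟩

lemma IsTraj.zero_eq (h : IsTraj Y Ω b x g u) (hu : 0 ≤ u) : g 0 = x := by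
  simpa using h.eq 0 ⟨le_rfl, hu⟩

lemma IsTraj.congr (h : IsTraj Y Ω b x g u) (hg : EqOn g g' (Icc 0 u))
    (hb : ∀ s ∈ Ico 0 u, ∀ l, b s l = b' s l) : IsTraj Y Ω b' x g' u := by
  refine ⟨h.cont.congr hg.symm, fun t ht => hg ht ▸ h.mem t ht, fun t ht => ?_⟩
  rw [← hg ht, h.eq t ht]
  congr 1
  refine intervalIntegral.integral_congr_Ioo_of_le ht.1 fun s hs => ?_
  have hs' : s ∈ Icc 0 u := ⟨hs.1.le, hs.2.le.trans ht.2⟩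
  simp only [hg hs']
  exact Finset.sum_congr rfl fun l _ => by rw [hb s ⟨hs.1.le, hs.2.trans_le ht.2⟩ l]

lemma aestronglyMeasurable_ctrl (hY : ∀ l, ContinuousOn (Y l) Ω)
    (hb : ∀ l, Measurable fun s => b s l) {s : Set ℝ} (hs : MeasurableSet s)
    (hg : ContinuousOn g s) (hm : ∀ t ∈ s, g t ∈ Ω) :
    AEStronglyMeasurable (fun s => ∑ l, b s l • Y l (g s)) (volume.restrict s) := by
  refine Finset.aestronglyMeasurable_fun_sum _ fun l _ => ?_
  exact (hb l).aestronglyMeasurable.smul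
    (((hY l).comp hg hm).aestronglyMeasurable hs)

lemma intervalIntegrable_ctrl (hY : ∀ l, ContinuousOn (Y l) Ω) (hb : IsCtrl r b) (hr : r ≤ 1)
    {v : ℝ} (hvu : v ≤ u) (hg : ContinuousOn g (Icc v u)) (hm : ∀ t ∈ Icc v u, g t ∈ Ω) :
    IntervalIntegrable (fun s => ∑ l, b s l • Y l (g s)) volume v u := by
  rw [intervalIntegrable_iff_integrableOn_Icc_of_le hvu]
  refine integrable_finsetSum _ fun l _ => ?_
  have h1 : IntegrableOn (fun s => Y l (g s)) (Icc v u) :=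
    ((hY l).comp hg hm).integrableOn_Icc
  exact h1.bdd_smul 1 (hb.measurable l).aestronglyMeasurable
    (Eventually.of_forall fun s => by simpa using hb.abs_le_one hr s l)

lemma IsTraj.intervalIntegrable (h : IsTraj Y Ω b x g u) (hY : ∀ l, ContinuousOn (Y l) Ω)
    (hb : IsCtrl r b) (hr : r ≤ 1) {s t : ℝ} (hs : s ∈ Icc 0 u) (ht : t ∈ Icc 0 u) :
    IntervalIntegrable (fun s => ∑ l, b s l • Y l (g s)) volume s t := by
  have h0 : (0 : ℝ) ≤ u := hs.1.trans hs.2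
  refine (intervalIntegrable_ctrl hY hb hr h0 h.cont h.mem).mono_set ?_
  rw [uIcc_of_le h0]
  exact uIcc_subset_Icc hs ht

lemma IsTraj.sub_eq (h : IsTraj Y Ω b x g u) (hY : ∀ l, ContinuousOn (Y l) Ω)
    (hb : IsCtrl r b) (hr : r ≤ 1) {s t : ℝ} (hs : s ∈ Icc 0 u) (ht : t ∈ Icc 0 u) :
    g t - g s = ∫ σ in s..t, ∑ l, b σ l • Y l (g σ) := by
  have h0 : (0 : ℝ) ∈ Icc 0 u := ⟨le_rfl, hs.1.trans hs.2⟩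
  rw [h.eq t ht, h.eq s hs, ← intervalIntegral.integral_interval_sub_left
    (h.intervalIntegrable hY hb hr h0 ht) (h.intervalIntegrable hY hb hr h0 hs)]
  abel

/-- Uniform local Lipschitz and size bounds for `Σ_l β_l Y_l`, `|β_l| ≤ 1`. -/
lemma exists_local_bounds (hΩ : IsOpen Ω) (hY : ∀ l, ContDiffOn ℝ 1 (Y l) Ω) {p : Euc n}
    (hp : p ∈ Ω) :
    ∃ K M ρ : ℝ, 0 ≤ K ∧ 0 ≤ M ∧ 0 < ρ ∧ closedBall p ρ ⊆ Ω ∧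
      ∀ β : ι → ℝ, (∀ l, |β l| ≤ 1) →
        (∀ z ∈ closedBall p ρ, ∀ z' ∈ closedBall p ρ,
          ‖(∑ l, β l • Y l z) - ∑ l, β l • Y l z'‖ ≤ K * ‖z - z'‖) ∧
        ∀ z ∈ closedBall p ρ, ‖∑ l, β l • Y l z‖ ≤ M := by
  have h1 : ∀ l, ∃ K : ℝ≥0, ∃ t ∈ 𝓝 p, LipschitzOnWith K (Y l) t := fun l =>
    ((hY l).contDiffAt (hΩ.mem_nhds hp)).exists_lipschitzOnWith
  choose K t ht hK using h1
  have h2 : (⋂ l, t l) ∩ Ω ∈ 𝓝 p :=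
    inter_mem (by simpa [Filter.iInter_mem] using ht) (hΩ.mem_nhds hp)
  obtain ⟨ρ, hρ, hsub⟩ := Metric.nhds_basis_closedBall.mem_iff.1 h2
  have hd : ∀ l, ∀ z ∈ closedBall p ρ, ∀ z' ∈ closedBall p ρ,
      ‖Y l z - Y l z'‖ ≤ K l * ‖z - z'‖ := fun l z hz z' hz' => by
    have hz1 := mem_iInter.1 (hsub hz).1 l
    have hz2 := mem_iInter.1 (hsub hz').1 l
    simpa [dist_eq_norm] using (hK l).dist_le_mul z hz1 z' hz2
  refine ⟨∑ l, (K l : ℝ), ∑ l, (‖Y l p‖ + K l * ρ), ρ, by positivity, by positivity, hρ,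
    fun z hz => (hsub hz).2, fun β hβ => ⟨fun z hz z' hz' => ?_, fun z hz => ?_⟩⟩
  · rw [← Finset.sum_sub_distrib, Finset.sum_mul]
    refine norm_sum_le_of_le _ fun l _ => ?_
    rw [← smul_sub, norm_smul, Real.norm_eq_abs]
    exact (mul_le_of_le_one_left (norm_nonneg _) (hβ l)).trans (hd l z hz z' hz')
  · refine norm_sum_le_of_le _ fun l _ => ?_
    rw [norm_smul, Real.norm_eq_abs]
    refine (mul_le_of_le_one_left (norm_nonneg _) (hβ l)).trans ?_
    have h3 := hd l z hz p (mem_closedBall_self hρ.le)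
    have h4 : ‖z - p‖ ≤ ρ := by simpa [dist_eq_norm] using hz
    have h5 : (K l : ℝ) * ‖z - p‖ ≤ K l * ρ := by gcongr
    have h6 : ‖Y l z‖ ≤ ‖Y l p‖ + ‖Y l z - Y l p‖ := by
      simpa using norm_add_le (Y l p) (Y l z - Y l p)
    linarith

lemma IsTraj.eqOn (hΩ : IsOpen Ω) (hY : ∀ l, ContDiffOn ℝ 1 (Y l) Ω) (hr : r ≤ 1)
    (hb : IsCtrl r b) (h : IsTraj Y Ω b x g u) (h' : IsTraj Y Ω b x g' u) :
    EqOn g g' (Icc 0 u) := by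
  rcases lt_or_ge u 0 with hu | hu
  · simp [Icc_eq_empty_of_lt hu]
  have hYc : ∀ l, ContinuousOn (Y l) Ω := fun l => (hY l).continuousOn
  have hcl : IsClosed ({t | g t = g' t} ∩ Icc 0 u) := by
    have := (h.cont.sub h'.cont).preimage_isClosed_of_isClosed isClosed_Icc
      (isClosed_singleton (x := (0 : Euc n)))
    convert this using 1
    ext t
    simp [sub_eq_zero, and_comm]
  refine hcl.Icc_subset_of_forall_exists_gt (by simp [h.zero_eq hu, h'.zero_eq hu]) ?_
  rintro t ⟨ht, ht0, htu⟩ y hy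
  have htI : t ∈ Icc 0 u := ⟨ht0, htu.le⟩
  obtain ⟨K, M, ρ, hK, hM, hρ, hsub, hKM⟩ := exists_local_bounds hΩ hY (h.mem t htI)
  have hball : ∀ {f : ℝ → Euc n}, ContinuousOn f (Icc 0 u) → f t = g t →
      ∀ᶠ v in 𝓝[>] t, f v ∈ closedBall (g t) ρ := fun {f} hf hft => by
    have h1 : Tendsto f (𝓝[Icc 0 u] t) (𝓝 (g t)) := hft ▸ hf t htI
    have h2 : 𝓝[>] t ≤ 𝓝[Icc 0 u] t := by
      rw [← nhdsWithin_Ioc_eq_nhdsGT htu]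
      exact nhdsWithin_mono _ fun v hv => ⟨ht0.trans hv.1.le, hv.2⟩
    exact h2 (h1 (closedBall_mem_nhds _ hρ))
  have hev : ∀ᶠ v in 𝓝[>] t, g v ∈ closedBall (g t) ρ ∧ g' v ∈ closedBall (g t) ρ :=
    (hball h.cont rfl).and (hball h'.cont ht.symm)
  obtain ⟨w, hw, hwb⟩ := (mem_nhdsGT_iff_exists_Ioc_subset).1 hev
  obtain ⟨η, hη, hηK⟩ : ∃ η : ℝ, 0 < η ∧ K * η < 1 :=
    ⟨1 / (K + 1), by positivity, by rw [mul_one_div, div_lt_one (by positivity)]; linarith⟩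
  set e := min (min w y) (min u (t + η)) with he
  have hte : t < e := by
    simp only [he, lt_min_iff]
    exact ⟨⟨hw, hy⟩, htu, by linarith⟩
  have hew : e ≤ w := (min_le_left _ _).trans (min_le_left _ _)
  have hey : e ≤ y := (min_le_left _ _).trans (min_le_right _ _)
  have heu : e ≤ u := (min_le_right _ _).trans (min_le_left _ _)
  have heη : e ≤ t + η := (min_le_right _ _).trans (min_le_right _ _)
  have hIsub : Icc t e ⊆ Icc 0 u := Icc_subset_Icc ht0 heu
  obtain ⟨m, hm, hmax⟩ := isCompact_Icc.exists_isMaxOn (nonempty_Icc.2 hte.le)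
    ((h.cont.sub h'.cont).norm.mono hIsub)
  have hin : ∀ v ∈ Icc t e, g v ∈ closedBall (g t) ρ ∧ g' v ∈ closedBall (g t) ρ := by
    rintro v ⟨hv1, hv2⟩
    rcases hv1.eq_or_lt with rfl | hv1
    · have ht' : g t = g' t := ht
      exact ⟨mem_closedBall_self hρ.le, ht' ▸ mem_closedBall_self hρ.le⟩
    · exact hwb ⟨hv1, hv2.trans hew⟩
  have hkey : ‖g m - g' m‖ ≤ K * ‖g m - g' m‖ * |m - t| := by
    have h1 : g m - g' m = ∫ σ in t..m, ((∑ l, b σ l • Y l (g σ)) -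
        ∑ l, b σ l • Y l (g' σ)) := by
      rw [intervalIntegral.integral_sub (h.intervalIntegrable hYc hb hr htI (hIsub hm))
        (h'.intervalIntegrable hYc hb hr htI (hIsub hm)), ← h.sub_eq hYc hb hr htI (hIsub hm),
        ← h'.sub_eq hYc hb hr htI (hIsub hm)]
      have ht' : g t = g' t := ht
      rw [ht']
      abel
    rw [h1]
    refine intervalIntegral.norm_integral_le_of_norm_le_const fun σ hσ => ?_
    rw [uIoc_of_le hm.1] at hσ
    have hσ' : σ ∈ Icc t e := ⟨hσ.1.le, hσ.2.trans hm.2⟩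
    rw [← h1]
    refine ((hKM (b σ) (hb.abs_le_one hr σ)).1 _ (hin σ hσ').1 _ (hin σ hσ').2).trans ?_
    have := hmax hσ'
    simp only [Pi.sub_apply, mem_ofPred_eq] at this
    gcongr
  have hzero : ‖g m - g' m‖ = 0 := by
    have h1 : |m - t| ≤ η := by
      rw [abs_of_nonneg (by linarith [hm.1])]
      linarith [hm.2]
    have h2 : K * ‖g m - g' m‖ * |m - t| ≤ K * ‖g m - g' m‖ * η := by gcongr
    nlinarith [norm_nonneg (g m - g' m)]
  refine ⟨e, ?_, hte, hey⟩
  have := hmax (right_mem_Icc.2 hte.le)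
  simp only [Pi.sub_apply, mem_ofPred_eq, hzero] at this
  exact sub_eq_zero.1 (norm_le_zero_iff.1 this)

lemma IsTraj.mem_closedBall (hY : ∀ l, ContinuousOn (Y l) Ω) (hr : r ≤ 1) (hb : IsCtrl r b)
    (h : IsTraj Y Ω b x g u) {t₀ ρ M : ℝ} (ht₀ : t₀ ∈ Icc 0 u) (hM : 0 ≤ M)
    (hbd : ∀ β : ι → ℝ, (∀ l, |β l| ≤ 1) → ∀ z ∈ closedBall (g t₀) ρ, ‖∑ l, β l • Y l z‖ ≤ M)
    (hρ : M * (u - t₀) < ρ) : ∀ s ∈ Icc t₀ u, g s ∈ closedBall (g t₀) ρ := by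
  have hsub : Icc t₀ u ⊆ Icc 0 u := Icc_subset_Icc_left ht₀.1
  have hcl : IsClosed ({s | ‖g s - g t₀‖ - M * (s - t₀) ≤ 0} ∩ Icc t₀ u) := by
    have hc : ContinuousOn (fun s => ‖g s - g t₀‖ - M * (s - t₀)) (Icc t₀ u) :=
      (((h.cont.mono hsub).sub continuousOn_const).norm).sub (by fun_prop)
    have := hc.preimage_isClosed_of_isClosed isClosed_Icc (isClosed_Iic (a := (0 : ℝ)))
    rwa [inter_comm] at this
  have hall : Icc t₀ u ⊆ {s | ‖g s - g t₀‖ - M * (s - t₀) ≤ 0} := by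
    refine hcl.Icc_subset_of_forall_exists_gt (by simp) ?_
    rintro t ⟨ht, ht1, ht2⟩ y hy
    have ht : ‖g t - g t₀‖ - M * (t - t₀) ≤ 0 := ht
    have htI : t ∈ Icc 0 u := hsub ⟨ht1, ht2.le⟩
    have hlt : g t ∈ ball (g t₀) ρ := by
      rw [mem_ball, dist_eq_norm]
      have : M * (t - t₀) ≤ M * (u - t₀) := by gcongr
      linarith
    have hev : ∀ᶠ v in 𝓝[>] t, g v ∈ ball (g t₀) ρ := by
      have h2 : 𝓝[>] t ≤ 𝓝[Icc 0 u] t := by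
        rw [← nhdsWithin_Ioc_eq_nhdsGT ht2]
        exact nhdsWithin_mono _ fun v hv => ⟨htI.1.trans hv.1.le, hv.2⟩
      exact h2 (h.cont t htI (isOpen_ball.mem_nhds hlt))
    obtain ⟨w, hw, hwb⟩ := (mem_nhdsGT_iff_exists_Ioc_subset).1 hev
    have hte : t < min w (min u y) := by simp only [lt_min_iff]; exact ⟨hw, ht2, hy⟩
    set e := min w (min u y) with he
    have hew : e ≤ w := min_le_left _ _
    have heu : e ≤ u := (min_le_right _ _).trans (min_le_left _ _)
    have hey : e ≤ y := (min_le_right _ _).trans (min_le_right _ _)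
    refine ⟨e, ?_, hte, hey⟩
    have h1 : ‖g e - g t‖ ≤ M * |e - t| := by
      rw [h.sub_eq hY hb hr htI ⟨htI.1.trans hte.le, heu⟩]
      refine intervalIntegral.norm_integral_le_of_norm_le_const fun σ hσ => ?_
      rw [uIoc_of_le hte.le] at hσ
      exact hbd _ (hb.abs_le_one hr σ) _ (ball_subset_closedBall (hwb ⟨hσ.1, hσ.2.trans hew⟩))
    rw [abs_of_pos (by linarith)] at h1
    have h2 : ‖g e - g t₀‖ ≤ ‖g e - g t‖ + ‖g t - g t₀‖ := by
      simpa using norm_add_le (g e - g t) (g t - g t₀)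
    show ‖g e - g t₀‖ - M * (e - t₀) ≤ 0
    linarith
  intro s hs
  have h1 : ‖g s - g t₀‖ - M * (s - t₀) ≤ 0 := hall hs
  rw [Metric.mem_closedBall, dist_eq_norm]
  have : M * (s - t₀) ≤ M * (u - t₀) := by gcongr; exact hs.2
  linarith

/-- `g` solves the control equation on `[0,1]` in the weak sense of `SolvesODE`, inside `Ω`. -/
def IsWeakSol (Y : ι → VF n) (Ω : Set (Euc n)) (b : ℝ → ι → ℝ) (x : Euc n)
    (g : ℝ → Euc n) : Prop :=
  (∀ u ∈ Icc (0 : ℝ) 1, g u ∈ Ω) ∧ g 0 = x ∧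
    ∀ u ∈ Icc (0 : ℝ) 1, g u = x + ∫ s in (0 : ℝ)..u, ∑ l, b s l • Y l (g s)

lemma IsWeakSol.isTraj_of_intervalIntegrable (h : IsWeakSol Y Ω b x g) (hu0 : 0 ≤ u) (hu : u ≤ 1)
    (hi : IntervalIntegrable (fun s => ∑ l, b s l • Y l (g s)) volume 0 u) :
    IsTraj Y Ω b x g u := by
  have heq : ∀ t ∈ Icc 0 u, g t = x + ∫ s in (0 : ℝ)..t, ∑ l, b s l • Y l (g s) :=
    fun t ht => h.2.2 t ⟨ht.1, ht.2.trans hu⟩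
  refine ⟨?_, fun t ht => h.1 t ⟨ht.1, ht.2.trans hu⟩, heq⟩
  refine ContinuousOn.congr ?_ heq
  have hint : IntegrableOn (fun s => ∑ l, b s l • Y l (g s)) (uIcc 0 u) := by
    rw [uIcc_of_le hu0]
    exact (intervalIntegrable_iff_integrableOn_Icc_of_le hu0).1 hi
  have := intervalIntegral.continuousOn_primitive_interval hint
  rw [uIcc_of_le hu0] at this
  exact continuousOn_const.add this

/-- A weak solution is either a genuine trajectory, or a trajectory that blows up. -/
lemma IsWeakSol.dichotomy (hr : r ≤ 1) (hb : IsCtrl r b) (h : IsWeakSol Y Ω b x g) :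
    IsTraj Y Ω b x g 1 ∨ ∃ v ∈ Ioc (0 : ℝ) 1, (∀ u ∈ Ico 0 v, IsTraj Y Ω b x g u) ∧
      ¬ IntervalIntegrable (fun s => ∑ l, b s l • Y l (g s)) volume 0 v := by
  by_cases h1 : IntervalIntegrable (fun s => ∑ l, b s l • Y l (g s)) volume 0 1
  · exact Or.inl (h.isTraj_of_intervalIntegrable zero_le_one le_rfl h1)
  right
  set S : Set ℝ := {u | u ∈ Icc (0 : ℝ) 1 ∧
    IntervalIntegrable (fun s => ∑ l, b s l • Y l (g s)) volume 0 u} with hS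
  have h0S : (0 : ℝ) ∈ S := ⟨⟨le_rfl, zero_le_one⟩, IntervalIntegrable.refl⟩
  have hbdd : BddAbove S := ⟨1, fun u hu => hu.1.2⟩
  set v := sSup S
  have hv0 : 0 ≤ v := le_csSup hbdd h0S
  have hv1 : v ≤ 1 := csSup_le ⟨0, h0S⟩ fun u hu => hu.1.2
  have hlt : ∀ u ∈ Ico 0 v,
      IntervalIntegrable (fun s => ∑ l, b s l • Y l (g s)) volume 0 u := by
    rintro u ⟨hu0, huv⟩
    obtain ⟨w, hw, huw⟩ := exists_lt_of_lt_csSup ⟨0, h0S⟩ huv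
    refine hw.2.mono_set ?_
    rw [uIcc_of_le hu0, uIcc_of_le hw.1.1]
    exact Icc_subset_Icc_right huw.le
  have hnv : ¬ IntervalIntegrable (fun s => ∑ l, b s l • Y l (g s)) volume 0 v := by
    intro hv
    apply h1
    refine hv.trans ?_
    have hconst : IntervalIntegrable (fun s => ∑ l, b s l • Y l x) volume v 1 :=
      intervalIntegrable_ctrl (Ω := univ) (g := fun _ => x)
        (Y := fun l _ => Y l x) (fun l => continuousOn_const) hb hr hv1
        continuousOn_const (fun _ _ => mem_univ _)
    rw [intervalIntegrable_iff_integrableOn_Ioc_of_le hv1] at hconst ⊢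
    refine hconst.congr_fun (fun s hs => ?_) measurableSet_Ioc
    have hns : ¬ IntervalIntegrable (fun s => ∑ l, b s l • Y l (g s)) volume 0 s :=
      fun hs' => absurd (le_csSup hbdd ⟨⟨hv0.trans hs.1.le, hs.2⟩, hs'⟩) (not_le.2 hs.1)
    have hgs : g s = x := by
      rw [h.2.2 s ⟨hv0.trans hs.1.le, hs.2⟩, intervalIntegral.integral_undef hns, add_zero]
    simp only [hgs]
  have hvpos : 0 < v := hv0.lt_of_ne fun h0 => hnv (h0 ▸ IntervalIntegrable.refl)
  exact ⟨v, ⟨hvpos, hv1⟩, fun u hu => h.isTraj_of_intervalIntegrable hu.1 (hu.2.le.trans hv1)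
    (hlt u hu), hnv⟩

lemma continuousOn_Ico_of_forall_isTraj (h : ∀ t ∈ Ico 0 u, IsTraj Y Ω b x g t) :
    ContinuousOn g (Ico 0 u) := by
  intro t ht
  obtain ⟨t', ht', ht'u⟩ := exists_between ht.2
  refine ((h t' ⟨ht.1.trans ht'.le, ht'u⟩).cont t ⟨ht.1, ht'.le⟩).mono_of_mem_nhdsWithin ?_
  filter_upwards [self_mem_nhdsWithin, mem_nhdsWithin_of_mem_nhds (Iio_mem_nhds ht')]
    with s hs hs' using ⟨hs.1, le_of_lt hs'⟩

/-- An integrable a priori bound on the speed turns weak solvability into solvability. -/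
lemma exists_isTraj_of_bound (hY : ∀ l, ContinuousOn (Y l) Ω) (hr : r ≤ 1) (hb : IsCtrl r b)
    (hex : ∃ g, IsWeakSol Y Ω b x g) {v : ℝ} (hv1 : v ≤ 1) {f : ℝ → ℝ}
    (hf : IntervalIntegrable f volume 0 v)
    (hbd : ∀ u ∈ Ico 0 v, ∀ g, IsTraj Y Ω b x g u → ∀ s ∈ Icc 0 u,
      ‖∑ l, b s l • Y l (g s)‖ ≤ f s) :
    ∃ g, IsTraj Y Ω b x g v := by
  obtain ⟨g, hg⟩ := hex
  refine ⟨g, ?_⟩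
  rcases hg.dichotomy hr hb with h | ⟨w, hw, hlt, hnot⟩
  · exact h.mono hv1
  rcases lt_or_ge v w with hvw | hwv
  · rcases lt_or_ge v 0 with h0 | h0
    · exact (hlt 0 ⟨le_rfl, hw.1⟩).mono h0.le
    · exact hlt v ⟨h0, hvw⟩
  exfalso
  apply hnot
  have hfw : IntegrableOn f (Ico 0 w) := by
    rw [integrableOn_Ico_iff_integrableOn_Ioo, ← integrableOn_Ioc_iff_integrableOn_Ioo,
      ← intervalIntegrable_iff_integrableOn_Ioc_of_le hw.1.le]
    refine hf.mono_set ?_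
    rw [uIcc_of_le hw.1.le, uIcc_of_le (hw.1.le.trans hwv)]
    exact Icc_subset_Icc_right hwv
  rw [intervalIntegrable_iff_integrableOn_Ioc_of_le hw.1.le,
    integrableOn_Ioc_iff_integrableOn_Ioo, ← integrableOn_Ico_iff_integrableOn_Ioo]
  refine Integrable.mono' hfw (aestronglyMeasurable_ctrl hY hb.measurable measurableSet_Ico
    ?_ ?_) ?_
  · exact continuousOn_Ico_of_forall_isTraj hlt
  · exact fun t ht => (hlt t ht).mem t ⟨ht.1, le_rfl⟩
  · refine (ae_restrict_iff' measurableSet_Ico).2 (Eventually.of_forall fun s hs => ?_)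
    exact hbd s ⟨hs.1, hs.2.trans_le hwv⟩ g (hlt s hs) s ⟨hs.1, le_rfl⟩

lemma exists_subseq_tendsto_of_lipschitz {E : Type*} [NormedAddCommGroup E] [ProperSpace E]
    {u L R : ℝ} {F : ℕ → ℝ → E}
    (hL : ∀ N, ∀ s ∈ Icc 0 u, ∀ t ∈ Icc 0 u, ‖F N s - F N t‖ ≤ L * |s - t|)
    (hR : ∀ N, ∀ t ∈ Icc 0 u, ‖F N t‖ ≤ R) :
    ∃ φ : ℕ → ℕ, StrictMono φ ∧ ∃ f : ℝ → E, ∀ t ∈ Icc 0 u,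
      Tendsto (fun k => F (φ k) t) atTop (𝓝 (f t)) := by
  have hlip : ∀ N, LipschitzWith (Real.toNNReal L) fun t : Icc 0 u => F N t := fun N =>
    LipschitzWith.of_dist_le_mul fun s t => by
      rw [dist_eq_norm, Subtype.dist_eq, Real.dist_eq]
      exact (hL N s s.2 t t.2).trans (by gcongr; exact Real.le_coe_toNNReal L)
  let G : ℕ → BoundedContinuousFunction (Icc 0 u) E := fun N =>
    BoundedContinuousFunction.mkOfCompact ⟨fun t : Icc 0 u => F N t, (hlip N).continuous⟩
  have hcomp : IsCompact (closure (range G)) := by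
    refine BoundedContinuousFunction.arzela_ascoli (closedBall 0 R) (isCompact_closedBall 0 R)
      _ ?_ ?_
    · rintro f t ⟨N, rfl⟩
      simpa [G] using hR N t t.2
    · refine (LipschitzWith.uniformEquicontinuous _ (Real.toNNReal L) ?_).equicontinuous
      rintro ⟨_, N, rfl⟩
      exact hlip N
  obtain ⟨f, -, φ, hφ, hlim⟩ := hcomp.tendsto_subseq fun N => subset_closure (mem_range_self N)
  refine ⟨φ, hφ, fun t => if h : t ∈ Icc 0 u then f ⟨t, h⟩ else 0, fun t ht => ?_⟩
  have h1 := (BoundedContinuousFunction.tendsto_iff_tendstoUniformly.1 hlim).tendsto_at ⟨t, ht⟩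
  simpa [ht, G, Function.comp_def] using h1

lemma isTraj_of_ae_hasDerivAt (hY : ∀ l, ContinuousOn (Y l) Ω) (hb : IsCtrl r b) (hr : r ≤ 1)
    (hu : 0 ≤ u) {M : ℝ} (hM0 : 0 ≤ M)
    (hgL : ∀ s ∈ Icc 0 u, ∀ t ∈ Icc 0 u, ‖g s - g t‖ ≤ M * |s - t|)
    (hgΩ : ∀ t ∈ Icc 0 u, g t ∈ Ω) (hbd : ∀ t ∈ Icc 0 u, ‖∑ l, b t l • Y l (g t)‖ ≤ M)
    (hg0 : g 0 = x)
    (hder : ∀ᵐ s, s ∈ Ioo 0 u → HasDerivAt g (∑ l, b s l • Y l (g s)) s) :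
    IsTraj Y Ω b x g u := by
  have hgcont : ContinuousOn g (Icc 0 u) := by
    refine (LipschitzOnWith.of_dist_le_mul (K := Real.toNNReal M) fun s hs t ht => ?_).continuousOn
    rw [Real.coe_toNNReal _ hM0, dist_eq_norm, Real.dist_eq]
    exact hgL s hs t ht
  have h0I : (0 : ℝ) ∈ Icc 0 u := ⟨le_rfl, hu⟩
  have hint : IntervalIntegrable (fun s => ∑ l, b s l • Y l (g s)) volume 0 u :=
    intervalIntegrable_ctrl hY hb hr hu hgcont hgΩ
  have hint' : ∀ t ∈ Icc 0 u,
      IntervalIntegrable (fun s => ∑ l, b s l • Y l (g s)) volume 0 t := fun t ht =>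
    hint.mono_set (by rw [uIcc_of_le hu]; exact uIcc_subset_Icc h0I ht)
  have hac : AbsolutelyContinuousOnInterval
      (fun t => g t - ∫ s in (0 : ℝ)..t, ∑ l, b s l • Y l (g s)) 0 u := by
    refine LipschitzOnWith.absolutelyContinuousOnInterval (K := Real.toNNReal (M + M)) ?_
    rw [uIcc_of_le hu]
    refine LipschitzOnWith.of_dist_le_mul fun s hs t ht => ?_
    rw [Real.coe_toNNReal _ (by positivity), dist_eq_norm, Real.dist_eq, sub_sub_sub_comm,
      intervalIntegral.integral_interval_sub_left (hint' s hs) (hint' t ht), add_mul]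
    refine (norm_sub_le _ _).trans (add_le_add (hgL s hs t ht) ?_)
    refine intervalIntegral.norm_integral_le_of_norm_le_const fun σ hσ => ?_
    exact hbd σ (uIcc_subset_Icc ht hs (uIoc_subset_uIcc hσ))
  have hae : ∀ᵐ s, s ∈ uIcc 0 u →
      HasDerivAt (fun t => g t - ∫ s in (0 : ℝ)..t, ∑ l, b s l • Y l (g s)) 0 s := by
    have hne0 : ∀ᵐ s : ℝ, s ≠ 0 := by simp [ae_iff]
    have hneu : ∀ᵐ s : ℝ, s ≠ u := by simp [ae_iff]
    filter_upwards [hder, hint.ae_hasDerivAt_integral, hne0, hneu]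
      with s h1 h2 h3 h4 hs
    have hs' := hs
    rw [uIcc_of_le hu] at hs'
    have := (h1 ⟨lt_of_le_of_ne hs'.1 h3.symm, lt_of_le_of_ne hs'.2 h4⟩).sub
      (h2 hs 0 left_mem_uIcc)
    rw [sub_self] at this
    exact this
  obtain ⟨c, hc⟩ := hac.const_of_ae_hasDerivAt_zero hae
  rw [uIcc_of_le hu] at hc
  have hcx : x = c := by simpa [hg0] using hc 0 h0I
  refine ⟨hgcont, hgΩ, fun t ht => ?_⟩
  rw [hcx, ← hc t ht]
  abel

set_option maxHeartbeats 1000000 in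
/-- Trajectories of controls bounded by `r` in a fixed compact set form a sequentially compact
family. -/
lemma exists_subseq_isTraj (hY : ∀ l, ContinuousOn (Y l) Ω) (hr0 : 0 ≤ r) (hr : r ≤ 1)
    {K : Set (Euc n)} (hK : IsCompact K) (hKΩ : K ⊆ Ω) (hu : 0 ≤ u) {bs : ℕ → ℝ → ι → ℝ}
    {gs : ℕ → ℝ → Euc n} (hb : ∀ N, IsCtrl r (bs N)) (hT : ∀ N, IsTraj Y Ω (bs N) x (gs N) u)
    (hgK : ∀ N, ∀ t ∈ Icc 0 u, gs N t ∈ K) :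
    ∃ φ : ℕ → ℕ, StrictMono φ ∧ ∃ (g : ℝ → Euc n) (b : ℝ → ι → ℝ), IsCtrl r b ∧
      IsTraj Y Ω b x g u ∧ ∀ t ∈ Icc 0 u, Tendsto (fun k => gs (φ k) t) atTop (𝓝 (g t)) := by
  have hYK : ∀ l, ContinuousOn (Y l) K := fun l => (hY l).mono hKΩ
  choose C hC using fun l => hK.exists_bound_of_continuousOn (hYK l)
  set M : ℝ := ∑ l, |C l| with hM
  have hM0 : 0 ≤ M := by positivity
  have hbd : ∀ β : ι → ℝ, (∀ l, |β l| ≤ 1) → ∀ z ∈ K, ‖∑ l, β l • Y l z‖ ≤ M := by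
    intro β hβ z hz
    refine norm_sum_le_of_le _ fun l _ => ?_
    rw [norm_smul, Real.norm_eq_abs]
    exact (mul_le_of_le_one_left (norm_nonneg _) (hβ l)).trans ((hC l z hz).trans (le_abs_self _))
  obtain ⟨R, hR⟩ := hK.isBounded.exists_norm_le
  have hgL : ∀ N, ∀ s ∈ Icc 0 u, ∀ t ∈ Icc 0 u, ‖gs N s - gs N t‖ ≤ M * |s - t| := by
    intro N s hs t ht
    rw [(hT N).sub_eq hY (hb N) hr ht hs]
    refine intervalIntegral.norm_integral_le_of_norm_le_const fun σ hσ => ?_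
    exact hbd _ ((hb N).abs_le_one hr σ) _
      (hgK N σ (uIcc_subset_Icc ht hs (uIoc_subset_uIcc hσ)))
  let β : ℕ → ℝ → EuclideanSpace ℝ ι := fun N s => WithLp.toLp 2 (bs N s)
  have hβn : ∀ N s, ‖β N s‖ ≤ √r := fun N s => by
    rw [EuclideanSpace.norm_eq]
    refine Real.sqrt_le_sqrt ?_
    simpa [β] using (hb N).bound s
  have hβm : ∀ N, Measurable (β N) := fun N =>
    (WithLp.measurable_toLp 2 _).comp (measurable_pi_iff.2 (hb N).measurable)
  have hβi : ∀ N s t, IntervalIntegrable (β N) volume s t := fun N s t =>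
    (intervalIntegrable_const (c := √r)).mono_fun (hβm N).aestronglyMeasurable
      (Eventually.of_forall fun σ => by
        simpa [abs_of_nonneg (Real.sqrt_nonneg r)] using hβn N σ)
  let Bs : ℕ → ℝ → EuclideanSpace ℝ ι := fun N t => ∫ s in (0 : ℝ)..t, β N s
  have hBsub : ∀ N s t, Bs N t - Bs N s = ∫ σ in s..t, β N σ := fun N s t =>
    intervalIntegral.integral_interval_sub_left (hβi N _ _) (hβi N _ _)
  have hBL : ∀ N s t, ‖Bs N s - Bs N t‖ ≤ √r * |s - t| := by
    intro N s t
    rw [hBsub]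
    exact intervalIntegral.norm_integral_le_of_norm_le_const fun σ _ => hβn N σ
  have hB0 : ∀ N, Bs N 0 = 0 := fun N => by simp [Bs]
  obtain ⟨φ, hφ, f, hf⟩ := exists_subseq_tendsto_of_lipschitz (u := u)
    (F := fun N t => (gs N t, Bs N t)) (L := max M √r) (R := max R (√r * u))
    (fun N s hs t ht => by
      rw [Prod.mk_sub_mk, Prod.norm_mk]
      refine max_le ((hgL N s hs t ht).trans ?_) ((hBL N s t).trans ?_)
      · gcongr; exact le_max_left _ _
      · gcongr; exact le_max_right _ _)
    (fun N t ht => by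
      rw [Prod.norm_mk]
      refine max_le_max (hR _ (hgK N t ht)) ?_
      have := hBL N t 0
      rw [hB0, sub_zero, sub_zero, abs_of_nonneg ht.1] at this
      exact this.trans (by gcongr; exact ht.2))
  set g : ℝ → Euc n := fun t => (f t).1 with hg
  have hglim : ∀ t ∈ Icc 0 u, Tendsto (fun k => gs (φ k) t) atTop (𝓝 (g t)) := fun t ht =>
    (continuous_fst.tendsto _).comp (hf t ht)
  have hBlim : ∀ t ∈ Icc 0 u, Tendsto (fun k => Bs (φ k) t) atTop (𝓝 (f t).2) := fun t ht =>
    (continuous_snd.tendsto _).comp (hf t ht)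
  have hgKl : ∀ t ∈ Icc 0 u, g t ∈ K := fun t ht =>
    hK.isClosed.mem_of_tendsto (hglim t ht) (Eventually.of_forall fun k => hgK _ t ht)
  have hgLl : ∀ s ∈ Icc 0 u, ∀ t ∈ Icc 0 u, ‖g s - g t‖ ≤ M * |s - t| := fun s hs t ht =>
    le_of_tendsto ((hglim s hs).sub (hglim t ht)).norm
      (Eventually.of_forall fun k => hgL _ s hs t ht)
  let B : ℝ → EuclideanSpace ℝ ι := fun t => (f (projIcc 0 u hu t)).2
  have hBlip : LipschitzWith (Real.toNNReal √r) B := LipschitzWith.of_dist_le_mul fun s t => by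
    rw [Real.coe_toNNReal _ (Real.sqrt_nonneg r), dist_eq_norm]
    have hs := (projIcc 0 u hu s).2
    have ht := (projIcc 0 u hu t).2
    have h1 : ‖B s - B t‖ ≤ √r * |(projIcc 0 u hu s : ℝ) - projIcc 0 u hu t| :=
      le_of_tendsto ((hBlim _ hs).sub (hBlim _ ht)).norm
        (Eventually.of_forall fun k => hBL _ _ _)
    refine h1.trans ?_
    gcongr
    rw [Real.dist_eq]
    exact abs_projIcc_sub_projIcc hu
  have hBeq : ∀ t ∈ Icc 0 u, B t = (f t).2 := fun t ht => by
    simp only [B, projIcc_of_mem hu ht]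
  let b : ℝ → ι → ℝ := fun s l => deriv B s l
  have hbc : IsCtrl r b := by
    refine ⟨fun l => ?_, fun s => ?_⟩
    · exact (EuclideanSpace.proj (𝕜 := ℝ) l).continuous.measurable.comp (measurable_deriv B)
    · have h1 : ‖deriv B s‖ ≤ √r := by
        have := norm_deriv_le_of_lipschitz (x₀ := s) hBlip
        rwa [Real.coe_toNNReal _ (Real.sqrt_nonneg r)] at this
      have h2 : ∑ l, b s l ^ 2 = ‖deriv B s‖ ^ 2 := by
        rw [EuclideanSpace.real_norm_sq_eq]
      rw [h2]
      calc ‖deriv B s‖ ^ 2 ≤ √r ^ 2 := by gcongr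
        _ = r := Real.sq_sqrt hr0
  have hder : ∀ s ∈ Ioo 0 u, DifferentiableAt ℝ B s →
      HasDerivAt g (∑ l, b s l • Y l (g s)) s := by
    intro s hs hBs
    have hsI : s ∈ Icc 0 u := Ioo_subset_Icc_self hs
    have hzero : HasDerivAt (fun t => g t - ∑ l, B t l • Y l (g s)) 0 s := by
      rw [hasDerivAt_iff_isLittleO, Asymptotics.isLittleO_iff]
      intro ε hε
      set ε' : ℝ := ε / (Fintype.card ι + 1) with hε'
      have hε'0 : 0 < ε' := by positivity
      have hεcard : (Fintype.card ι : ℝ) * ε' ≤ ε := by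
        rw [hε', mul_div_assoc', div_le_iff₀ (by positivity)]
        nlinarith
      have hcont : ∀ᶠ z in 𝓝[K] (g s), ∀ l, ‖Y l z - Y l (g s)‖ ≤ ε' := by
        rw [eventually_all]
        intro l
        have h1 := (hYK l) (g s) (hgKl s hsI)
        filter_upwards [h1 (closedBall_mem_nhds _ hε'0)] with z hz
        simpa [dist_eq_norm] using hz
      obtain ⟨ρ, hρ, hρK⟩ := Metric.mem_nhdsWithin_iff.1 hcont
      have hnear : ∀ᶠ t in 𝓝 s, M * |t - s| < ρ / 2 ∧ t ∈ Ioo 0 u := by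
        refine Eventually.and ?_ (isOpen_Ioo.mem_nhds hs)
        have hc : Continuous fun t : ℝ => M * |t - s| := by fun_prop
        exact hc.continuousAt.eventually_lt continuousAt_const (by simpa using half_pos hρ)
      filter_upwards [hnear] with t ht
      have htI : t ∈ Icc 0 u := Ioo_subset_Icc_self ht.2
      have hkey : ∀ᶠ k in atTop, ‖(gs (φ k) t - gs (φ k) s) -
          ∑ l, (Bs (φ k) t - Bs (φ k) s) l • Y l (g s)‖ ≤ ε * |t - s| := by
        have hclose : ∀ᶠ k in atTop, gs (φ k) s ∈ ball (g s) (ρ / 2) :=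
          hglim s hsI (ball_mem_nhds _ (half_pos hρ))
        filter_upwards [hclose] with k hk
        set N := φ k
        have hcomp : ∀ l, (Bs N t - Bs N s) l = ∫ σ in s..t, bs N σ l := fun l => by
          rw [hBsub]
          exact ((EuclideanSpace.proj (𝕜 := ℝ) l).intervalIntegral_comp_comm (hβi N s t)).symm
        have hbi : ∀ l, IntervalIntegrable (fun σ => bs N σ l • Y l (g s)) volume s t := by
          intro l
          have : IntervalIntegrable (fun σ => bs N σ l) volume s t :=
            (intervalIntegrable_const (c := (1 : ℝ))).mono_fun
              ((hb N).measurable l).aestronglyMeasurable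
              (Eventually.of_forall fun σ => by simpa using (hb N).abs_le_one hr σ l)
          exact ⟨this.1.smul_const _, this.2.smul_const _⟩
        have hid : (gs N t - gs N s) - ∑ l, (Bs N t - Bs N s) l • Y l (g s) =
            ∫ σ in s..t, ∑ l, bs N σ l • (Y l (gs N σ) - Y l (g s)) := by
          rw [(hT N).sub_eq hY (hb N) hr hsI htI]
          have h2 : ∑ l, (Bs N t - Bs N s) l • Y l (g s) =
              ∫ σ in s..t, ∑ l, bs N σ l • Y l (g s) := by
            rw [intervalIntegral.integral_finsetSum fun l _ => hbi l]
            refine Finset.sum_congr rfl fun l _ => ?_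
            rw [hcomp, intervalIntegral.integral_smul_const]
          have hsi : IntervalIntegrable (fun σ => ∑ l, bs N σ l • Y l (g s)) volume s t := by
            have := IntervalIntegrable.sum Finset.univ (fun l _ => hbi l)
            simpa only [Finset.sum_fn] using this
          rw [h2, ← intervalIntegral.integral_sub
            ((hT N).intervalIntegrable hY (hb N) hr hsI htI) hsi]
          refine intervalIntegral.integral_congr fun σ _ => ?_
          simp only [smul_sub, Finset.sum_sub_distrib]
        rw [hid]
        refine intervalIntegral.norm_integral_le_of_norm_le_const fun σ hσ => ?_
        have hσ' := uIoc_subset_uIcc hσ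
        have hσI : σ ∈ Icc 0 u := uIcc_subset_Icc hsI htI hσ'
        have hσs : |σ - s| ≤ |t - s| := abs_sub_left_of_mem_uIcc hσ'
        have hin : gs N σ ∈ ball (g s) ρ := by
          rw [mem_ball, dist_eq_norm] at hk ⊢
          have h3 := hgL N σ hσI s hsI
          have h4 : M * |σ - s| ≤ M * |t - s| := by gcongr
          have h5 : ‖gs N σ - g s‖ ≤ ‖gs N σ - gs N s‖ + ‖gs N s - g s‖ := by
            simpa using norm_add_le (gs N σ - gs N s) (gs N s - g s)
          linarith [ht.1]
        have hYl : ∀ l, ‖Y l (gs N σ) - Y l (g s)‖ ≤ ε' := hρK ⟨hin, hgK N σ hσI⟩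
        calc ‖∑ l, bs N σ l • (Y l (gs N σ) - Y l (g s))‖ ≤ ∑ _l : ι, ε' := by
              refine norm_sum_le_of_le _ fun l _ => ?_
              rw [norm_smul, Real.norm_eq_abs]
              exact (mul_le_of_le_one_left (norm_nonneg _)
                ((hb N).abs_le_one hr σ l)).trans (hYl l)
          _ ≤ ε := by simpa using hεcard
      have hl : Tendsto (fun k => (gs (φ k) t - gs (φ k) s) -
          ∑ l, (Bs (φ k) t - Bs (φ k) s) l • Y l (g s)) atTop
          (𝓝 ((g t - g s) - ∑ l, (B t - B s) l • Y l (g s))) := by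
        refine ((hglim t htI).sub (hglim s hsI)).sub (tendsto_finsetSum _ fun l _ => ?_)
        refine Tendsto.smul_const ?_ _
        rw [hBeq t htI, hBeq s hsI]
        exact ((EuclideanSpace.proj (𝕜 := ℝ) l).continuous.tendsto _).comp
          ((hBlim t htI).sub (hBlim s hsI))
      have hfin := le_of_tendsto hl.norm hkey
      have heq : g t - ∑ l, B t l • Y l (g s) - (g s - ∑ l, B s l • Y l (g s)) -
          (t - s) • (0 : Euc n) = (g t - g s) - ∑ l, (B t - B s) l • Y l (g s) := by
        simp only [smul_zero, sub_zero, PiLp.sub_apply, sub_smul, Finset.sum_sub_distrib]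
        abel
      rw [heq, Real.norm_eq_abs]
      exact hfin
    have hsum : HasDerivAt (fun t => ∑ l, B t l • Y l (g s)) (∑ l, b s l • Y l (g s)) s := by
      refine HasDerivAt.fun_sum fun l _ => ?_
      refine HasDerivAt.smul_const ?_ _
      exact (EuclideanSpace.proj (𝕜 := ℝ) l).hasFDerivAt.comp_hasDerivAt s hBs.hasDerivAt
    have h := hzero.add hsum
    rw [zero_add] at h
    exact h.congr_of_eventuallyEq (Eventually.of_forall fun t => by simp)
  have h0I : (0 : ℝ) ∈ Icc 0 u := ⟨le_rfl, hu⟩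
  have hg0 : g 0 = x := by
    refine tendsto_nhds_unique (hglim 0 h0I) ?_
    simp only [(hT _).zero_eq hu]
    exact tendsto_const_nhds
  refine ⟨φ, hφ, g, b, hbc, isTraj_of_ae_hasDerivAt hY hbc hr hu hM0 hgLl
    (fun t ht => hKΩ (hgKl t ht)) (fun t ht => hbd _ (hbc.abs_le_one hr t) _ (hgKl t ht)) hg0 ?_,
    hglim⟩
  filter_upwards [hBlip.ae_differentiableAt_real] with s h1 hs
  exact hder s hs h1

variable {κ : Type*} [Fintype κ] {W : κ → VF n} {B : Set (Euc n)} {e : κ → ι → Euc n → ℝ}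
  {a : ℝ → κ → ℝ} {γ : ℝ → Euc n} {T : Set ℝ}

/-- On the reachable set `B` of the `Y`-system, the controlled field `Σ_i a_i W_i` is a combination
of the `Y_l` whose coefficients are admissible controls. -/
structure IsReducible (Y : ι → VF n) (W : κ → VF n) (Ω B : Set (Euc n))
    (e : κ → ι → Euc n → ℝ) (a : ℝ → κ → ℝ) (x : Euc n) (r : ℝ) : Prop where
  isOpen : IsOpen Ω
  contDiffOn : ∀ l, ContDiffOn ℝ 1 (Y l) Ω
  contDiffOn' : ∀ i, ContDiffOn ℝ 1 (W i) Ω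
  nonneg : 0 ≤ r
  le_one : r ≤ 1
  isCtrl : IsCtrl 1 a
  solvable : ∀ b, IsCtrl r b → ∃ g, IsWeakSol Y Ω b x g
  mem_of_isTraj : ∀ b g u, IsCtrl r b → u ∈ Icc (0 : ℝ) 1 → IsTraj Y Ω b x g u → g u ∈ B
  continuousOn : ∀ i l, ContinuousOn (e i l) B
  eq_sum : ∀ z ∈ B, ∀ i, W i z = ∑ l, e i l z • Y l z
  bound : ∀ s, ∀ z ∈ B, ∑ l, (∑ i, a s i * e i l z) ^ 2 ≤ r

/-- The control `Σ_i a_i(s) e_i(γ(s))` on `T`, extended by zero. -/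
def feedback (e : κ → ι → Euc n → ℝ) (a : ℝ → κ → ℝ) (γ : ℝ → Euc n) (T : Set ℝ) (s : ℝ)
    (l : ι) : ℝ :=
  ∑ i, a s i * T.indicator (fun s => e i l (γ s)) s

lemma feedback_of_mem {ι : Type*} {e : κ → ι → Euc n → ℝ} {s : ℝ} (hs : s ∈ T) (l : ι) :
    feedback e a γ T s l = ∑ i, a s i * e i l (γ s) := by
  simp [feedback, hs]

lemma feedback_of_notMem {ι : Type*} {e : κ → ι → Euc n → ℝ} {s : ℝ} (hs : s ∉ T)
    (l : ι) : feedback e a γ T s l = 0 := by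
  simp [feedback, hs]

namespace IsReducible

lemma continuousOn_left (h : IsReducible Y W Ω B e a x r) (l : ι) : ContinuousOn (Y l) Ω :=
  (h.contDiffOn l).continuousOn

lemma continuousOn_right (h : IsReducible Y W Ω B e a x r) (i : κ) : ContinuousOn (W i) Ω :=
  (h.contDiffOn' i).continuousOn

lemma isCtrl_feedback (h : IsReducible Y W Ω B e a x r) (hT : MeasurableSet T)
    (hγ : ContinuousOn γ T) (hγB : ∀ s ∈ T, γ s ∈ B) : IsCtrl r (feedback e a γ T) := by
  refine ⟨fun l => ?_, fun s => ?_⟩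
  · refine Finset.measurable_fun_sum _ fun i _ => (h.isCtrl.measurable i).mul ?_
    classical
    rw [← piecewise_eq_indicator]
    exact ((h.continuousOn i l).comp hγ hγB).measurable_piecewise continuousOn_const hT
  · by_cases hs : s ∈ T
    · simpa only [feedback_of_mem hs] using h.bound s _ (hγB s hs)
    · simpa [feedback_of_notMem hs] using h.nonneg

lemma sum_smul_eq (h : IsReducible Y W Ω B e a x r) (s : ℝ) {z : Euc n} (hz : z ∈ B) :
    ∑ i, a s i • W i z = ∑ l, (∑ i, a s i * e i l z) • Y l z := by
  simp only [h.eq_sum z hz, Finset.smul_sum, Finset.sum_smul, smul_smul]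
  exact Finset.sum_comm

lemma isTraj_feedback (h : IsReducible Y W Ω B e a x r) (hγ : IsTraj W Ω a x γ u)
    (hγB : ∀ s ∈ Icc 0 u, γ s ∈ B) : IsTraj Y Ω (feedback e a γ (Icc 0 u)) x γ u := by
  refine ⟨hγ.cont, hγ.mem, fun t ht => ?_⟩
  rw [hγ.eq t ht]
  congr 1
  refine intervalIntegral.integral_congr fun s hs => ?_
  have hs' : s ∈ Icc 0 u := uIcc_subset_Icc ⟨le_rfl, ht.1.trans ht.2⟩ ht hs
  simp only [feedback_of_mem hs']
  exact h.sum_smul_eq s (hγB s hs')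

/-- A trajectory continues under any admissible control for a time controlled by local bounds. -/
lemma exists_isTraj_of_local_bound (h : IsReducible Y W Ω B e a x r) (hb : IsCtrl r b)
    {t₀ t₁ ρ M : ℝ} (hγ : IsTraj Y Ω b x γ t₀) (ht₀ : 0 ≤ t₀) (ht₁ : t₁ ≤ 1)
    (hM : 0 ≤ M)
    (hbd : ∀ β : ι → ℝ, (∀ l, |β l| ≤ 1) → ∀ z ∈ closedBall (γ t₀) ρ, ‖∑ l, β l • Y l z‖ ≤ M)
    (hρ : M * (t₁ - t₀) < ρ) : ∃ g, IsTraj Y Ω b x g t₁ := by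
  have hY := h.continuousOn_left
  choose C hC using fun l => isCompact_Icc.exists_bound_of_continuousOn
    ((hY l).comp hγ.cont hγ.mem)
  refine exists_isTraj_of_bound hY h.le_one hb (h.solvable b hb) ht₁
    (f := fun _ => max (∑ l, |C l|) M) intervalIntegrable_const fun w hw g hg s hs => ?_
  rcases le_or_gt s t₀ with hst | hst
  · refine le_max_of_le_left ?_
    have hgs : g s = γ s := (hg.mono hs.2).eqOn h.isOpen h.contDiffOn h.le_one hb
      (hγ.mono hst) ⟨hs.1, le_rfl⟩
    rw [hgs]
    refine norm_sum_le_of_le _ fun l _ => ?_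
    rw [norm_smul, Real.norm_eq_abs]
    exact (mul_le_of_le_one_left (norm_nonneg _) (hb.abs_le_one h.le_one s l)).trans
      ((hC l s ⟨hs.1, hst⟩).trans (le_abs_self _))
  · refine le_max_of_le_right ?_
    have htw : t₀ ∈ Icc 0 w := ⟨ht₀, hst.le.trans hs.2⟩
    have hgt : g t₀ = γ t₀ := (hg.mono htw.2).eqOn h.isOpen h.contDiffOn h.le_one hb
      hγ ⟨ht₀, le_rfl⟩
    rw [← hgt] at hbd
    refine hbd _ (hb.abs_le_one h.le_one s) _ (hg.mem_closedBall hY h.le_one hb htw hM hbd ?_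
      s ⟨hst.le, hs.2⟩)
    refine lt_of_le_of_lt ?_ hρ
    gcongr
    exact hw.2.le

/-- Euler polygons for the `W`-system, driven by admissible controls of the `Y`-system. -/
lemma exists_polygon (h : IsReducible Y W Ω B e a x r)
    {t₀ t₁ ρ M : ℝ} (hγ : IsTraj W Ω a x γ t₀) (hγB : ∀ s ∈ Icc 0 t₀, γ s ∈ B)
    (ht₀ : 0 ≤ t₀) (ht₁ : t₁ ≤ 1) (hM : 0 ≤ M)
    (hbd : ∀ β : ι → ℝ, (∀ l, |β l| ≤ 1) → ∀ z ∈ closedBall (γ t₀) ρ, ‖∑ l, β l • Y l z‖ ≤ M)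
    (hρ : M * (t₁ - t₀) < ρ) {η : ℝ} (hη : 0 < η) (k : ℕ) (hk : t₀ + k * η ≤ t₁) :
    ∃ b g, IsCtrl r b ∧ (∀ s ∈ Ico 0 t₀, ∀ l, feedback e a γ (Icc 0 t₀) s l = b s l) ∧
      IsTraj Y Ω b x g t₁ ∧ ∀ s ∈ Ico t₀ (t₀ + k * η), ∃ τ ∈ Icc t₀ s, s - τ ≤ η ∧
        ∀ l, b s l = ∑ i, a s i * e i l (g τ) := by
  have hctrl := h.isCtrl_feedback measurableSet_Icc hγ.cont hγB
  have hγY := h.isTraj_feedback hγ hγB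
  induction k with
  | zero =>
    obtain ⟨g, hg⟩ := h.exists_isTraj_of_local_bound hctrl hγY ht₀ ht₁ hM hbd hρ
    refine ⟨_, g, hctrl, fun s _ l => rfl, hg, fun s hs => ?_⟩
    simp at hs
  | succ k ih =>
    have hk' : t₀ + k * η ≤ t₁ := by
      push_cast at hk
      linarith
    obtain ⟨b, g, hb, hbγ, hg, hgb⟩ := ih hk'
    set v : ℝ := t₀ + k * η with hv
    have hv0 : t₀ ≤ v := by
      have : 0 ≤ k * η := by positivity
      linarith
    have hvI : v ∈ Icc 0 t₁ := ⟨ht₀.trans hv0, hk'⟩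
    have hgv : g v ∈ B := h.mem_of_isTraj b g v hb ⟨hvI.1, hvI.2.trans ht₁⟩ (hg.mono hk')
    let b' : ℝ → ι → ℝ := fun s l => if s < v then b s l else ∑ i, a s i * e i l (g v)
    have hb' : IsCtrl r b' := by
      refine ⟨fun l => ?_, fun s => ?_⟩
      · refine Measurable.ite measurableSet_Iio (hb.measurable l) ?_
        exact Finset.measurable_fun_sum _ fun i _ => (h.isCtrl.measurable i).mul_const _
      · by_cases hs : s < v
        · simpa [b', hs] using hb.bound s
        · simpa [b', hs] using h.bound s _ hgv
    have hbb' : ∀ s ∈ Ico 0 v, ∀ l, b s l = b' s l := fun s hs l => by simp [b', hs.2]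
    have hbγ' : ∀ s ∈ Ico 0 t₀, ∀ l, feedback e a γ (Icc 0 t₀) s l = b' s l := fun s hs l =>
      (hbγ s hs l).trans (hbb' s ⟨hs.1, hs.2.trans_le hv0⟩ l)
    obtain ⟨g', hg'⟩ := h.exists_isTraj_of_local_bound hb'
      (hγY.congr (fun _ _ => rfl) hbγ') ht₀ ht₁ hM hbd hρ
    have heq : EqOn g g' (Icc 0 v) :=
      ((hg.mono hk').congr (fun _ _ => rfl) hbb').eqOn h.isOpen h.contDiffOn h.le_one hb'
        (hg'.mono hk')
    refine ⟨b', g', hb', hbγ', hg', fun s hs => ?_⟩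
    rcases lt_or_ge s v with hsv | hsv
    · obtain ⟨τ, hτ, hτη, hτb⟩ := hgb s ⟨hs.1, hsv⟩
      refine ⟨τ, hτ, hτη, fun l => ?_⟩
      rw [← hbb' s ⟨ht₀.trans hs.1, hsv⟩ l, hτb l, heq ⟨ht₀.trans hτ.1, hτ.2.trans hsv.le⟩]
    · refine ⟨v, ⟨hv0, hsv⟩, ?_, fun l => ?_⟩
      · have := hs.2
        push_cast at this
        rw [hv]
        linarith
      · simp only [b', not_lt.2 hsv, if_false]
        rw [heq ⟨hvI.1, le_rfl⟩]

/-- A trajectory of the `W`-system inside `B` can be continued inside `B`. -/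
lemma exists_extension (h : IsReducible Y W Ω B e a x r) {t₀ : ℝ}
    (hγ : IsTraj W Ω a x γ t₀) (hγB : ∀ s ∈ Icc 0 t₀, γ s ∈ B) (ht₀ : t₀ ∈ Ico (0 : ℝ) 1) :
    ∃ t₁ ∈ Ioc t₀ 1, ∃ g, IsTraj W Ω a x g t₁ ∧ ∀ s ∈ Icc 0 t₁, g s ∈ B := by
  have hY := h.continuousOn_left
  have ht₀I : t₀ ∈ Icc 0 t₀ := ⟨ht₀.1, le_rfl⟩
  have hγY := h.isTraj_feedback hγ hγB
  obtain ⟨_, M, ρ, _, hM, hρ, hsub, hKM⟩ := exists_local_bounds h.isOpen h.contDiffOn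
    (hγ.mem t₀ ht₀I)
  have hbd : ∀ β : ι → ℝ, (∀ l, |β l| ≤ 1) → ∀ z ∈ closedBall (γ t₀) ρ,
      ‖∑ l, β l • Y l z‖ ≤ M := fun β hβ => (hKM β hβ).2
  set t₁ : ℝ := min 1 (t₀ + ρ / (M + 1)) with ht₁
  have h01 : t₀ < t₁ := lt_min ht₀.2 (by
    have : 0 < ρ / (M + 1) := by positivity
    linarith)
  have ht₁1 : t₁ ≤ 1 := min_le_left _ _
  have hMρ : M * (t₁ - t₀) < ρ := by
    have h1 : t₁ - t₀ ≤ ρ / (M + 1) := by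
      have := min_le_right 1 (t₀ + ρ / (M + 1))
      linarith
    rw [le_div_iff₀ (by positivity)] at h1
    nlinarith
  have hη : ∀ N : ℕ, 0 < (t₁ - t₀) / (N + 1) := fun N => div_pos (by linarith) (by positivity)
  have hend : ∀ N : ℕ, t₀ + (N + 1 : ℕ) * ((t₁ - t₀) / (N + 1)) = t₁ := fun N => by
    have : (N : ℝ) + 1 ≠ 0 := by positivity
    push_cast
    field_simp
    ring
  choose bs gs hbs hbγ hgs hτ using fun N : ℕ => h.exists_polygon hγ hγB ht₀.1 ht₁1 hM hbd hMρ
    (hη N) (N + 1) (hend N).le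
  simp only [hend] at hτ
  have heqγ : ∀ N, EqOn γ (gs N) (Icc 0 t₀) := fun N =>
    (hγY.congr (fun _ _ => rfl) (hbγ N)).eqOn h.isOpen h.contDiffOn h.le_one (hbs N)
      ((hgs N).mono h01.le)
  have ht₀I' : t₀ ∈ Icc 0 t₁ := ⟨ht₀.1, h01.le⟩
  have hball : ∀ N, ∀ s ∈ Icc t₀ t₁, gs N s ∈ closedBall (γ t₀) ρ := fun N => by
    rw [heqγ N ht₀I] at hbd ⊢
    exact (hgs N).mem_closedBall hY h.le_one (hbs N) ht₀I' hM hbd hMρ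
  set K : Set (Euc n) := γ '' Icc 0 t₀ ∪ closedBall (γ t₀) ρ with hK
  have hKc : IsCompact K :=
    (isCompact_Icc.image_of_continuousOn hγ.cont).union (isCompact_closedBall _ _)
  have hKΩ : K ⊆ Ω := union_subset (by rintro _ ⟨s, hs, rfl⟩; exact hγ.mem s hs) hsub
  have hgK : ∀ N, ∀ t ∈ Icc 0 t₁, gs N t ∈ K := fun N t ht => by
    rcases le_or_gt t t₀ with htt | htt
    · exact Or.inl ⟨t, ⟨ht.1, htt⟩, heqγ N ⟨ht.1, htt⟩⟩
    · exact Or.inr (hball N t ⟨htt.le, ht.2⟩)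
  have h0t₁ : 0 ≤ t₁ := ht₀.1.trans h01.le
  obtain ⟨φ, hφ, g, b, hb, hg, hlim⟩ := exists_subseq_isTraj hY h.nonneg h.le_one hKc hKΩ
    h0t₁ hbs hgs hgK
  have hgB : ∀ s ∈ Icc 0 t₁, g s ∈ B := fun s hs =>
    h.mem_of_isTraj b g s hb ⟨hs.1, hs.2.trans ht₁1⟩ (hg.mono hs.2)
  have hgsB : ∀ N, ∀ s ∈ Icc 0 t₁, gs N s ∈ B := fun N s hs =>
    h.mem_of_isTraj (bs N) (gs N) s (hbs N) ⟨hs.1, hs.2.trans ht₁1⟩ ((hgs N).mono hs.2)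
  have hgγ : EqOn γ g (Icc 0 t₀) := fun s hs => by
    refine tendsto_nhds_unique ?_ (hlim s ⟨hs.1, hs.2.trans h01.le⟩)
    simp only [← heqγ _ hs]
    exact tendsto_const_nhds
  have hblim : ∀ s ∈ Ico 0 t₁, ∀ l,
      Tendsto (fun k => bs (φ k) s l) atTop (𝓝 (∑ i, a s i * e i l (g s))) := by
    intro s hs l
    rcases lt_or_ge s t₀ with hst | hst
    · have h1 : ∀ k, bs (φ k) s l = ∑ i, a s i * e i l (g s) := fun k => by
        rw [← hbγ _ s ⟨hs.1, hst⟩, feedback_of_mem (T := Icc 0 t₀) ⟨hs.1, hst.le⟩,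
          hgγ ⟨hs.1, hst.le⟩]
      simp only [h1]
      exact tendsto_const_nhds
    · choose τ hτI hτη hτb using fun k => hτ (φ k) s ⟨hst, hs.2⟩
      have hsI : s ∈ Icc 0 t₁ := ⟨hs.1, hs.2.le⟩
      have hτI' : ∀ k, τ k ∈ Icc 0 t₁ := fun k =>
        ⟨ht₀.1.trans (hτI k).1, (hτI k).2.trans hs.2.le⟩
      have hdiff : ∀ k, ‖gs (φ k) (τ k) - gs (φ k) s‖ ≤ M * ((t₁ - t₀) / (φ k + 1)) := by
        intro k
        have h1 : ‖gs (φ k) (τ k) - gs (φ k) s‖ ≤ M * |τ k - s| := by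
          rw [(hgs (φ k)).sub_eq hY (hbs _) h.le_one hsI (hτI' k)]
          refine intervalIntegral.norm_integral_le_of_norm_le_const fun σ hσ => ?_
          have hσ' : σ ∈ Icc t₀ t₁ := uIcc_subset_Icc ⟨hst, hs.2.le⟩
            ⟨(hτI k).1, (hτI' k).2⟩ (uIoc_subset_uIcc hσ)
          exact hbd _ ((hbs _).abs_le_one h.le_one σ) _ (hball _ σ hσ')
        refine h1.trans ?_
        gcongr
        rw [abs_sub_comm, abs_of_nonneg (by linarith [(hτI k).2])]
        exact hτη k
      have hsmall : Tendsto (fun k => M * ((t₁ - t₀) / ((φ k : ℝ) + 1))) atTop (𝓝 0) := by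
        have h1 : Tendsto (fun k => (φ k : ℝ) + 1) atTop atTop :=
          tendsto_atTop_add_const_right _ _
            (tendsto_natCast_atTop_atTop.comp hφ.tendsto_atTop)
        simpa using (tendsto_const_nhds.div_atTop h1).const_mul M
      have hgτ : Tendsto (fun k => gs (φ k) (τ k)) atTop (𝓝 (g s)) := by
        have h1 := squeeze_zero_norm hdiff hsmall
        simpa using h1.add (hlim s hsI)
      have hgτ' : Tendsto (fun k => gs (φ k) (τ k)) atTop (𝓝[B] (g s)) :=
        tendsto_nhdsWithin_iff.2 ⟨hgτ, Eventually.of_forall fun k => hgsB _ _ (hτI' k)⟩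
      simp only [hτb]
      exact tendsto_finsetSum _ fun i _ =>
        ((h.continuousOn i l (g s) (hgB s hsI)).tendsto.comp hgτ').const_mul _
  choose C hC using fun l => hKc.exists_bound_of_continuousOn ((hY l).mono hKΩ)
  refine ⟨t₁, ⟨h01, ht₁1⟩, g, ⟨hg.cont, hg.mem, fun t ht => ?_⟩, hgB⟩
  have hsubI : ∀ {s}, s ∈ uIoc 0 t → s ∈ Icc 0 t₁ := fun {s} hs =>
    uIcc_subset_Icc (⟨le_rfl, h0t₁⟩ : (0 : ℝ) ∈ Icc 0 t₁) ht (uIoc_subset_uIcc hs)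
  have hconv : Tendsto (fun k => ∫ s in (0 : ℝ)..t, ∑ l, bs (φ k) s l • Y l (gs (φ k) s)) atTop
      (𝓝 (∫ s in (0 : ℝ)..t, ∑ i, a s i • W i (g s))) := by
    have hne : ∀ᵐ s : ℝ, s ≠ t₁ := by simp [ae_iff]
    refine intervalIntegral.tendsto_integral_filter_of_dominated_convergence
      (fun _ => ∑ l, |C l|) (Eventually.of_forall fun k => ?_)
      (Eventually.of_forall fun k => Eventually.of_forall fun s hs => ?_)
      intervalIntegrable_const ?_
    · exact ((hgs (φ k)).intervalIntegrable hY (hbs _) h.le_one ⟨le_rfl, h0t₁⟩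
        ht).aestronglyMeasurable_restrict_uIoc
    · refine norm_sum_le_of_le _ fun l _ => ?_
      rw [norm_smul, Real.norm_eq_abs]
      exact (mul_le_of_le_one_left (norm_nonneg _) ((hbs _).abs_le_one h.le_one s l)).trans
        ((hC l _ (hgK _ s (hsubI hs))).trans (le_abs_self _))
    · filter_upwards [hne] with s hs hst
      have hsI := hsubI hst
      rw [h.sum_smul_eq s (hgB s hsI)]
      refine tendsto_finsetSum _ fun l _ => (hblim s ⟨hsI.1, lt_of_le_of_ne hsI.2 hs⟩ l).smul ?_
      exact ((hY l).continuousAt (h.isOpen.mem_nhds (hg.mem s hsI))).tendsto.comp (hlim s hsI)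
  refine tendsto_nhds_unique (hlim t ht) ?_
  simp only [(hgs _).eq t ht]
  exact tendsto_const_nhds.add hconv

end IsReducible

lemma IsTraj.isWeakSol (h : IsTraj Y Ω b x g 1) : IsWeakSol Y Ω b x g :=
  ⟨h.mem, h.zero_eq zero_le_one, h.eq⟩

namespace IsReducible

lemma exists_isTraj_zero (h : IsReducible Y W Ω B e a x r) :
    ∃ g, IsTraj Y Ω (fun _ _ => 0) x g 0 := by
  obtain ⟨g, hg⟩ := h.solvable (fun _ _ => 0)
    ⟨fun l => measurable_const, fun s => by simpa using h.nonneg⟩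
  exact ⟨g, hg.isTraj_of_intervalIntegrable le_rfl zero_le_one IntervalIntegrable.refl⟩

lemma mem_start (h : IsReducible Y W Ω B e a x r) : x ∈ B := by
  obtain ⟨g, hg⟩ := h.exists_isTraj_zero
  rw [← hg.zero_eq le_rfl]
  exact h.mem_of_isTraj _ g 0 ⟨fun l => measurable_const, fun s => by simpa using h.nonneg⟩
    ⟨le_rfl, zero_le_one⟩ hg

lemma start_mem (h : IsReducible Y W Ω B e a x r) : x ∈ Ω := by
  obtain ⟨g, hg⟩ := h.exists_isTraj_zero
  rw [← hg.zero_eq le_rfl]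
  exact hg.mem 0 ⟨le_rfl, le_rfl⟩

/-- A `W`-trajectory of finite length on a half-open interval reaches the endpoint inside `B`. -/
lemma exists_isTraj_endpoint (h : IsReducible Y W Ω B e a x r) (hu : u ∈ Icc (0 : ℝ) 1)
    (hγ : ∀ t ∈ Ico 0 u, IsTraj W Ω a x γ t) (hγB : ∀ t ∈ Ico 0 u, γ t ∈ B)
    (hi : IntervalIntegrable (fun s => ∑ i, a s i • W i (γ s)) volume 0 u) :
    ∃ g, IsTraj W Ω a x g u ∧ ∀ s ∈ Icc 0 u, g s ∈ B := by
  have hctrl := h.isCtrl_feedback (e := e) measurableSet_Ico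
    (continuousOn_Ico_of_forall_isTraj hγ) hγB
  have hγY : ∀ t ∈ Ico 0 u, IsTraj Y Ω (feedback e a γ (Ico 0 u)) x γ t := fun t ht => by
    refine (h.isTraj_feedback (hγ t ht) fun s hs => hγB s ⟨hs.1, hs.2.trans_lt ht.2⟩).congr
      (fun _ _ => rfl) fun s hs l => ?_
    rw [feedback_of_mem (T := Icc 0 t) ⟨hs.1, hs.2.le⟩,
      feedback_of_mem (T := Ico 0 u) ⟨hs.1, hs.2.trans ht.2⟩]
  have heq : ∀ t ∈ Ico 0 u, ∀ g, IsTraj Y Ω (feedback e a γ (Ico 0 u)) x g t →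
      ∀ s ∈ Icc 0 t, γ s = g s ∧
        ∑ l, feedback e a γ (Ico 0 u) s l • Y l (g s) = ∑ i, a s i • W i (g s) := by
    intro t ht g hg s hs
    have h1 := (hγY t ht).eqOn h.isOpen h.contDiffOn h.le_one hctrl hg hs
    have hsu : s ∈ Ico 0 u := ⟨hs.1, hs.2.trans_lt ht.2⟩
    refine ⟨h1, ?_⟩
    rw [← h1, h.sum_smul_eq s (hγB s hsu)]
    simp only [feedback_of_mem hsu]
  obtain ⟨g, hg⟩ := exists_isTraj_of_bound h.continuousOn_left h.le_one hctrl
    (h.solvable _ hctrl) hu.2 hi.norm fun t ht g hg s hs => by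
      obtain ⟨h1, h2⟩ := heq t ht g hg s hs
      rw [h2, h1]
  refine ⟨g, ⟨hg.cont, hg.mem, fun t ht => ?_⟩, fun s hs =>
    h.mem_of_isTraj _ g s hctrl ⟨hs.1, hs.2.trans hu.2⟩ (hg.mono hs.2)⟩
  rw [hg.eq t ht]
  congr 1
  refine intervalIntegral.integral_congr_Ioo_of_le ht.1 fun s hs => ?_
  have hsu : s ∈ Ico 0 u := ⟨hs.1.le, hs.2.trans_le ht.2⟩
  exact (heq s hsu g (hg.mono hsu.2.le) s ⟨hsu.1, le_rfl⟩).2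

lemma exists_isWeakSol (h : IsReducible Y W Ω B e a x r) : ∃ g, IsWeakSol W Ω a x g ∧ g 1 ∈ B := by
  classical
  set S : Set ℝ := {u | u ∈ Icc (0 : ℝ) 1 ∧ ∃ g, IsTraj W Ω a x g u ∧ ∀ s ∈ Icc 0 u, g s ∈ B}
    with hS
  have hmono : ∀ {u v}, u ∈ S → 0 ≤ v → v ≤ u → v ∈ S := by
    rintro u v ⟨hu, g, hg, hgB⟩ h0 hv
    exact ⟨⟨h0, hv.trans hu.2⟩, g, hg.mono hv, fun s hs => hgB s ⟨hs.1, hs.2.trans hv⟩⟩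
  have h0S : (0 : ℝ) ∈ S := by
    refine ⟨⟨le_rfl, zero_le_one⟩, fun _ => x, ⟨continuousOn_const, fun _ _ => h.start_mem,
      fun t ht => ?_⟩, fun _ _ => h.mem_start⟩
    obtain rfl : t = 0 := le_antisymm ht.2 ht.1
    simp
  have hch : ∀ u, ∃ g, u ∈ S → IsTraj W Ω a x g u ∧ ∀ s ∈ Icc 0 u, g s ∈ B := fun u => by
    by_cases hu : u ∈ S
    · obtain ⟨-, g, hg⟩ := hu
      exact ⟨g, fun _ => hg⟩
    · exact ⟨fun _ => x, fun hu' => absurd hu' hu⟩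
  choose G hG using hch
  let γ : ℝ → Euc n := fun t => if t ∈ S then G t t else x
  have hGγ : ∀ u ∈ S, EqOn (G u) γ (Icc 0 u) := fun u hu t ht => by
    have htS := hmono hu ht.1 ht.2
    simp only [γ, if_pos htS]
    exact ((hG u hu).1.mono ht.2).eqOn h.isOpen h.contDiffOn' le_rfl h.isCtrl (hG t htS).1
      ⟨ht.1, le_rfl⟩
  have hγ : ∀ u ∈ S, IsTraj W Ω a x γ u := fun u hu =>
    (hG u hu).1.congr (hGγ u hu) fun _ _ _ => rfl
  have hγB : ∀ t, γ t ∈ B := fun t => by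
    by_cases ht : t ∈ S
    · rw [← hGγ t ht ⟨ht.1.1, le_rfl⟩]
      exact (hG t ht).2 t ⟨ht.1.1, le_rfl⟩
    · simpa only [γ, if_neg ht] using h.mem_start
  refine ⟨γ, ?_, hγB 1⟩
  by_cases h1S : (1 : ℝ) ∈ S
  · exact (hγ 1 h1S).isWeakSol
  have hbdd : BddAbove S := ⟨1, fun u hu => hu.1.2⟩
  set v := sSup S
  have hv : v ∈ Icc (0 : ℝ) 1 := ⟨le_csSup hbdd h0S, csSup_le ⟨0, h0S⟩ fun u hu => hu.1.2⟩
  have hvS : v ∉ S := fun hvS => by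
    have hv1 : v < 1 := lt_of_le_of_ne hv.2 fun h1 => h1S (h1 ▸ hvS)
    obtain ⟨t₁, ht₁, g, hg, hgB⟩ := h.exists_extension (hγ v hvS) (fun s _ => hγB s) ⟨hv.1, hv1⟩
    exact absurd (le_csSup hbdd ⟨⟨hv.1.trans ht₁.1.le, ht₁.2⟩, g, hg, hgB⟩) (not_le.2 ht₁.1)
  have hlt : ∀ u ∈ Ico 0 v, u ∈ S := fun u hu => by
    obtain ⟨w, hw, huw⟩ := exists_lt_of_lt_csSup ⟨0, h0S⟩ hu.2
    exact hmono hw hu.1 huw.le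
  have hni : ¬ IntervalIntegrable (fun s => ∑ i, a s i • W i (γ s)) volume 0 v := fun hi =>
    hvS ⟨hv, h.exists_isTraj_endpoint hv (fun t ht => hγ t (hlt t ht)) (fun t _ => hγB t) hi⟩
  refine ⟨fun u _ => ?_, (hγ 0 h0S).zero_eq le_rfl, fun u hu => ?_⟩
  · by_cases hu : u ∈ S
    · exact (hγ u hu).mem u ⟨hu.1.1, le_rfl⟩
    · simpa only [γ, if_neg hu] using h.start_mem
  · by_cases huS : u ∈ S
    · exact (hγ u huS).eq u ⟨hu.1, le_rfl⟩
    · have hvu : v ≤ u := not_lt.1 fun huv => huS (hlt u ⟨hu.1, huv⟩)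
      have hnu : ¬ IntervalIntegrable (fun s => ∑ i, a s i • W i (γ s)) volume 0 u := fun hi =>
        hni (hi.mono_set (by
          rw [uIcc_of_le hv.1, uIcc_of_le hu.1]
          exact Icc_subset_Icc_right hvu))
      rw [intervalIntegral.integral_undef hnu, add_zero]
      simp only [γ, if_neg huS]

lemma mem_of_isWeakSol (h : IsReducible Y W Ω B e a x r) (hg : IsWeakSol W Ω a x g) :
    g 1 ∈ B := by
  obtain ⟨g', hg', hB⟩ := h.exists_isWeakSol
  by_cases hi : IntervalIntegrable (fun s => ∑ i, a s i • W i (g s)) volume 0 1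
  · have hgt := hg.isTraj_of_intervalIntegrable zero_le_one le_rfl hi
    rcases hg'.dichotomy le_rfl h.isCtrl with h1 | ⟨v, hv, hlt, hni⟩
    · rwa [hgt.eqOn h.isOpen h.contDiffOn' le_rfl h.isCtrl h1 ⟨zero_le_one, le_rfl⟩]
    · refine absurd ?_ hni
      have hiv : IntervalIntegrable (fun s => ∑ i, a s i • W i (g s)) volume 0 v :=
        hgt.intervalIntegrable (fun i => h.continuousOn_right i) h.isCtrl le_rfl
          ⟨le_rfl, zero_le_one⟩ ⟨hv.1.le, hv.2⟩
      rw [intervalIntegrable_iff_integrableOn_Ioo_of_le hv.1.le] at hiv ⊢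
      refine hiv.congr_fun (fun s hs => ?_) measurableSet_Ioo
      have hs' : s ∈ Ico 0 v := ⟨hs.1.le, hs.2⟩
      have h2 : g s = g' s := (hgt.mono (hs.2.le.trans hv.2)).eqOn h.isOpen h.contDiffOn' le_rfl
        h.isCtrl (hlt s hs') ⟨hs.1.le, le_rfl⟩
      simp only [h2]
  · rw [hg.2.2 1 ⟨zero_le_one, le_rfl⟩, intervalIntegral.integral_undef hi, add_zero]
    exact h.mem_start

end IsReducible

lemma IsTraj.isWeakSol_stop (hY : ∀ l, ContinuousOn (Y l) Ω) (hr0 : 0 ≤ r) (hr : r ≤ 1)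
    (hb : IsCtrl r b) (h : IsTraj Y Ω b x g u) (hu : 0 ≤ u) :
    ∃ b', IsCtrl r b' ∧ IsWeakSol Y Ω b' x fun t => g (min t u) := by
  let b' : ℝ → ι → ℝ := fun s l => if s < u then b s l else 0
  have hb' : IsCtrl r b' := by
    refine ⟨fun l => Measurable.ite measurableSet_Iio (hb.measurable l) measurable_const,
      fun s => ?_⟩
    by_cases hs : s < u
    · simpa [b', hs] using hb.bound s
    · simpa [b', hs] using hr0
  have hmin : ∀ t, 0 ≤ t → min t u ∈ Icc 0 u := fun t ht => ⟨le_min ht hu, min_le_right _ _⟩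
  have hcont : ∀ t, ContinuousOn (fun t => g (min t u)) (Icc 0 t) := fun t =>
    h.cont.comp (by fun_prop) fun s hs => hmin s hs.1
  have hle : ∀ t ∈ Icc 0 u,
      g t = x + ∫ s in (0 : ℝ)..t, ∑ l, b' s l • Y l (g (min s u)) := fun t ht => by
    rw [h.eq t ht]
    congr 1
    refine intervalIntegral.integral_congr_Ioo_of_le ht.1 fun s hs => ?_
    have hsu : s < u := hs.2.trans_le ht.2
    simp only [b', if_pos hsu, min_eq_left hsu.le]
  refine ⟨b', hb', fun t ht => h.mem _ (hmin t ht.1), ?_, fun t ht => ?_⟩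
  · simpa only [min_eq_left hu] using h.zero_eq hu
  rcases le_or_gt t u with htu | htu
  · simpa only [min_eq_left htu] using hle t ⟨ht.1, htu⟩
  · have hzero : ∫ s in u..t, ∑ l, b' s l • Y l (g (min s u)) = 0 := by
      rw [intervalIntegral.integral_congr_Ioo_of_le (g := fun _ => 0) htu.le fun s hs => ?_]
      · simp
      · simp [b', not_lt.2 hs.1.le]
    rw [← intervalIntegral.integral_add_adjacent_intervals
      (intervalIntegrable_ctrl hY hb' hr hu (hcont u) fun s hs => h.mem _ (hmin s hs.1))
      (intervalIntegrable_ctrl hY hb' hr htu.le ((hcont t).mono (Icc_subset_Icc_left hu))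
        fun s hs => h.mem _ (hmin s (hu.trans hs.1))), hzero, add_zero]
    simp only [min_eq_right htu.le]
    exact hle u ⟨hu, le_rfl⟩

/-- A subunit control agrees almost everywhere on `[0,1]` with one bounded everywhere. -/
lemma IsSubunit.exists_isCtrl (hb : IsSubunit b) : ∃ b', IsCtrl 1 b' ∧
    ∀ (Y : ι → VF n) (Ω : Set (Euc n)) (x : Euc n) (g : ℝ → Euc n),
      IsWeakSol Y Ω b x g ↔ IsWeakSol Y Ω b' x g := by
  obtain ⟨hm, c, hc, hae⟩ := hb
  let b' : ℝ → ι → ℝ := fun s l => if ∑ l, b s l ^ 2 ≤ 1 then b s l else 0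
  have hset : MeasurableSet {s | ∑ l, b s l ^ 2 ≤ 1} :=
    measurableSet_le (Finset.measurable_fun_sum _ fun l _ => (hm l).pow_const 2) measurable_const
  refine ⟨b', ⟨fun l => Measurable.ite hset (hm l) measurable_const, fun s => ?_⟩,
    fun Y Ω x g => ?_⟩
  · by_cases hs : ∑ l, b s l ^ 2 ≤ 1
    · simp [b', hs]
    · simp [b', hs]
  · rw [ae_restrict_iff' measurableSet_Icc] at hae
    have hint : ∀ u ∈ Icc (0 : ℝ) 1, ∫ s in (0 : ℝ)..u, ∑ l, b s l • Y l (g s) =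
        ∫ s in (0 : ℝ)..u, ∑ l, b' s l • Y l (g s) := fun u hu => by
      refine intervalIntegral.integral_congr_ae ?_
      filter_upwards [hae] with s hs hsu
      rw [uIoc_of_le hu.1] at hsu
      have h1 := (hs ⟨hsu.1.le, hsu.2.trans hu.2⟩).trans hc.le
      simp only [b', if_pos h1]
    refine and_congr_right fun _ => and_congr_right fun _ => forall₂_congr fun u hu => ?_
    rw [hint u hu]

lemma IsCtrl.isSubunit (hb : IsCtrl r b) (hr : r < 1) : IsSubunit b :=
  ⟨hb.measurable, r, hr, Eventually.of_forall hb.bound⟩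

end Trajectories

section Dilations

variable {ν : ℕ} {δ d : Fin ν → ℝ}

lemma dpow_nonneg (hδ : ∀ μ, 0 ≤ δ μ) (d : Fin ν → ℝ) : 0 ≤ dpow δ d :=
  Finset.prod_nonneg fun μ _ => Real.rpow_nonneg (hδ μ) _

lemma dpow_le_one (hδ : δ ∈ unitCube ν) (hd : ∀ μ, 0 ≤ d μ) : dpow δ d ≤ 1 :=
  Finset.prod_le_one (fun μ _ => Real.rpow_nonneg (hδ μ).1 _)
    fun μ _ => Real.rpow_le_one (hδ μ).1 (hδ μ).2 (hd μ)

lemma dpow_const_pos {c : ℝ} (hc : 0 < c) (d : Fin ν → ℝ) : 0 < dpow (vecConst ν c) d :=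
  Finset.prod_pos fun _ _ => Real.rpow_pos_of_pos hc _

lemma dpow_const_mul {c : ℝ} (hc : 0 ≤ c) (hδ : ∀ μ, 0 ≤ δ μ) (d : Fin ν → ℝ) :
    dpow (fun μ => c * δ μ) d = dpow (vecConst ν c) d * dpow δ d := by
  simp only [dpow, vecConst, ← Finset.prod_mul_distrib]
  exact Finset.prod_congr rfl fun μ _ => Real.mul_rpow hc (hδ μ)

lemma tendsto_dpow_const (hd : (∀ μ, 0 ≤ d μ) ∧ d ≠ 0) :
    Tendsto (fun c => dpow (vecConst ν c) d) (𝓝[>] 0) (𝓝 0) := by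
  have hpos : 0 < ∑ μ, d μ := by
    obtain ⟨μ, hμ⟩ := Function.ne_iff.1 hd.2
    exact Finset.sum_pos' (fun μ _ => hd.1 μ)
      ⟨μ, Finset.mem_univ _, lt_of_le_of_ne (hd.1 μ) (Ne.symm hμ)⟩
  have h1 : Tendsto (fun c : ℝ => c ^ ∑ μ, d μ) (𝓝[>] 0) (𝓝 0) := by
    have := (Real.continuousAt_rpow_const 0 (∑ μ, d μ) (Or.inr hpos.le)).tendsto
    rw [Real.zero_rpow hpos.ne'] at this
    exact this.mono_left nhdsWithin_le_nhds
  refine h1.congr' ?_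
  filter_upwards [self_mem_nhdsWithin] with c hc
  exact Real.rpow_sum_of_pos hc d Finset.univ

end Dilations

end Zhang

/-- Lemma 6.4: containment of Carnot–Carathéodory balls under control. -/
theorem statement_8 {ν n q Q : ℕ}
    (Ω : Set (Euc n)) (hΩ : IsOpen Ω) (h0 : (0 : Euc n) ∈ Ω)
    (X : Fin q → VF n) (d : Fin q → Deg ν) (Z : Fin Q → VF n) (D : Fin Q → Deg ν)
    (hXs : ∀ l, ContDiffOn ℝ (⊤ : ℕ∞) (X l) Ω) (hZs : ∀ i, ContDiffOn ℝ (⊤ : ℕ∞) (Z i) Ω)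
    (hd : ∀ l, (∀ μ, 0 ≤ d l μ) ∧ d l ≠ 0) (hD : ∀ i, (∀ μ, 0 ≤ D i μ) ∧ D i ≠ 0)
    (ξ₁ : ℝ) (hξ₁ : 0 < ξ₁) (U : Set (Euc n)) (hU : IsOpen U) (h0U : (0 : Euc n) ∈ U)
    (hUΩ : U ⊆ Ω)
    (hC : ∀ x ∈ U, SatC X d x (vecConst ν ξ₁) Ω)
    (hbrackets : ∀ i j, ControlsOn X d Ω U ξ₁ (lieBracket (X i) (X j)) (d i + d j))
    (hZctrl : ∀ i, ControlsOn X d Ω U ξ₁ (Z i) (D i)) :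
    ∃ c : ℝ, 0 < c ∧
      (∀ x ∈ U, ∀ δ ∈ unitCube ν,
        CCBall Z D Ω x (fun μ => c * ξ₁ * δ μ) ⊆ CCBall X d Ω x (fun μ => ξ₁ * δ μ)) ∧
      ∀ x ∈ U, SatC Z D x (vecConst ν (c * ξ₁)) Ω := by
  have h1top : (1 : WithTop ℕ∞) ≤ ((⊤ : ℕ∞) : WithTop ℕ∞) := by exact_mod_cast le_top
  choose cc hcc_eq hcc_cont hcc_bdd using fun i => (hZctrl i).2
  choose K hK using fun i => hcc_bdd i 0
  have hlim : Tendsto (fun c : ℝ => ∑ l, ∑ i, (dpow (vecConst ν (c * ξ₁)) (D i) *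
      (dpow (vecConst ν ξ₁) (d l))⁻¹ * K i) ^ 2) (𝓝[>] 0) (𝓝 0) := by
    have hmul : Tendsto (fun c : ℝ => c * ξ₁) (𝓝[>] 0) (𝓝[>] 0) := by
      refine tendsto_nhdsWithin_iff.2 ⟨?_, ?_⟩
      · have : Tendsto (fun c : ℝ => c * ξ₁) (𝓝 0) (𝓝 (0 * ξ₁)) :=
          (continuous_mul_const ξ₁).tendsto 0
        rw [zero_mul] at this
        exact this.mono_left nhdsWithin_le_nhds
      · filter_upwards [self_mem_nhdsWithin] with c hc using mul_pos hc hξ₁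
    have h1 : ∀ l i, Tendsto (fun c : ℝ => (dpow (vecConst ν (c * ξ₁)) (D i) *
        (dpow (vecConst ν ξ₁) (d l))⁻¹ * K i) ^ 2) (𝓝[>] 0) (𝓝 0) := fun l i => by
      simpa using ((((tendsto_dpow_const (hD i)).comp hmul).mul_const
        (dpow (vecConst ν ξ₁) (d l))⁻¹).mul_const (K i)).pow 2
    simpa using tendsto_finsetSum Finset.univ fun l _ =>
      tendsto_finsetSum Finset.univ fun i _ => h1 l i
  obtain ⟨c, hc, hc0⟩ := ((hlim.eventually (ge_mem_nhds (by norm_num : (0 : ℝ) < 1 / 4))).and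
    self_mem_nhdsWithin).exists
  have hc0 : 0 < c := hc0
  have hcξ : 0 < c * ξ₁ := mul_pos hc0 hξ₁
  have hred : ∀ x ∈ U, ∀ δ ∈ unitCube ν, ∀ a : ℝ → Fin Q → ℝ, IsCtrl 1 a →
      IsReducible (fun l z => dpow (fun μ => ξ₁ * δ μ) (d l) • X l z)
        (fun i z => dpow (fun μ => c * ξ₁ * δ μ) (D i) • Z i z) Ω
        (CCBall X d Ω x fun μ => ξ₁ * δ μ)
        (fun i l z => dpow (vecConst ν (c * ξ₁)) (D i) * (dpow (vecConst ν ξ₁) (d l))⁻¹ *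
          cc i x δ l z) a x (1 / 4) := by
    intro x hx δ hδ a ha
    have hδ0 : ∀ μ, 0 ≤ δ μ := fun μ => (hδ μ).1
    have hY : ∀ l, ContDiffOn ℝ 1 (fun z => dpow (fun μ => ξ₁ * δ μ) (d l) • X l z) Ω := fun l =>
      ((hXs l).of_le h1top).const_smul _
    refine ⟨hΩ, hY, fun i => ((hZs i).of_le h1top).const_smul _,
      by norm_num, by norm_num, ha, fun b hb => ?_, fun b g u hb hu hg => ?_, fun i l => ?_,
      fun z hz i => ?_, fun s z hz => ?_⟩
    · have hsub : IsCtrl (1 / 4) fun s l => b s l * dpow δ (d l) := by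
        refine ⟨fun l => (hb.measurable l).mul_const _, fun s => ?_⟩
        refine (Finset.sum_le_sum fun l _ => ?_).trans (hb.bound s)
        rw [mul_pow]
        exact mul_le_of_le_one_right (sq_nonneg _)
          (pow_le_one₀ (dpow_nonneg hδ0 _) (dpow_le_one hδ (hd l).1))
      obtain ⟨g, hgΩ, hg⟩ := hC x hx _ (hsub.isSubunit (by norm_num))
      refine ⟨g, hgΩ, hg.1, fun u hu => ?_⟩
      rw [hg.2 u hu]
      simp only [dpow_const_mul hξ₁.le hδ0, smul_smul, mul_assoc, mul_comm (dpow δ _)]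
    · obtain ⟨b', hb', hw⟩ := hg.isWeakSol_stop (fun l => (hY l).continuousOn) (by norm_num)
        (by norm_num) hb hu.1
      exact ⟨_, b', hb'.isSubunit (by norm_num), hw.1, hw.2, by simp only [min_eq_right hu.2]⟩
    · exact continuousOn_const.mul (hcc_cont i x hx δ hδ l [])
    · rw [dpow_const_mul hcξ.le hδ0, mul_smul, hcc_eq i x hx δ hδ z hz, Finset.smul_sum]
      refine Finset.sum_congr rfl fun l _ => ?_
      have hne := (dpow_const_pos hξ₁ (d l)).ne'
      rw [dpow_const_mul hξ₁.le hδ0]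
      simp only [smul_smul]
      congr 1
      field_simp
    · refine (Finset.sum_le_sum fun l _ => ?_).trans hc
      refine (Finset.sum_mul_sq_le_sq_mul_sq _ _ _).trans ?_
      refine (mul_le_of_le_one_left (Finset.sum_nonneg fun _ _ => sq_nonneg _)
        (ha.bound s)).trans (Finset.sum_le_sum fun i _ => ?_)
      have h1 : |cc i x δ l z| ≤ K i := hK i x hx δ hδ l [] le_rfl z hz
      rw [mul_pow, mul_pow _ (K i)]
      exact mul_le_mul_of_nonneg_left (sq_le_sq.2 (h1.trans (le_abs_self _))) (sq_nonneg _)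
  refine ⟨c, hc0, fun x hx δ hδ y hy => ?_, fun x hx a ha => ?_⟩
  · obtain ⟨g, a, ha, hgΩ, hg, rfl⟩ := hy
    obtain ⟨a', ha', hiff⟩ := ha.exists_isCtrl (n := n)
    exact (hred x hx δ hδ a' ha').mem_of_isWeakSol ((hiff _ _ _ _).1 ⟨hgΩ, hg⟩)
  · obtain ⟨a', ha', hiff⟩ := ha.exists_isCtrl (n := n)
    have h1 : (fun _ => 1 : Fin ν → ℝ) ∈ unitCube ν := fun μ => ⟨zero_le_one, le_rfl⟩
    obtain ⟨g, hg, -⟩ := (hred x hx _ h1 a' ha').exists_isWeakSol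
    obtain ⟨hgΩ, hg⟩ := (hiff _ _ _ _).2 hg
    refine ⟨g, hgΩ, ?_⟩
    simp only [mul_one] at hg
    exact hg
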